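/- arXiv:2304.00304 — 2 statements merged into one kernel-verified Lean document; each statement's English description precedes it below -/
import Mathlib

section
/- Let n ≥ k > r ≥ 1, D ∈ ℝ^{n×k}, and X, X̃ ∈ 𝕆^{n×k} be such that XᵀD ⪰ 0, X̃ᵀD ⪰ 0, and rank(XᵀD) = rank(X̃ᵀD) = r. Let XᵀD = VΣVᵀ and X̃ᵀD = ṼΣ̃Ṽᵀ be spectral decompositions with V, Ṽ ∈ 𝕆^{k×k} orthogonal, Σ = diag(σ_1, …, σ_r, 0, …, 0), Σ̃ = diag(σ̃_1, …, σ̃_r, 0, …, 0), σ_1 ≥ … ≥ σ_r > 0, σ̃_1 ≥ … ≥ σ̃_r > 0; write V₁ = V_{(:,1:r)}, V₂ = V_{(:,r+1:k)}. Let X_⊥ ∈ ℝ^{n×(n−k)} satisfy X_⊥ᵀX_⊥ = I_{n−k} and XᵀX_⊥ = 0. Then there exists W ∈ 𝕆^{(k−r)×(k−r)} such that ‖X̃ − (XV₁V₁ᵀ + XV₂WV₂ᵀ)‖₂ ≤ ( √2 + √( 8‖D‖₂²/(σ_r + σ̃_r)² + 4‖D‖₂²/(max{σ_r, σ̃_r})²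 ) + 4‖D‖₂/max{σ_r, σ̃_r} ) · ‖X_⊥ᵀX̃‖₂, where ‖X_⊥ᵀX̃‖₂ = ‖sin Θ(R(X), R(X̃))‖₂. -/
open Matrix

noncomputable def specNorm {m n : ℕ} (A : Matrix (Fin m) (Fin n) ℝ) : ℝ :=
  ‖(Matrix.toEuclideanLin A).toContinuousLinearMap‖

def headCols {m : ℕ} (r : ℕ) (h : r ≤ m) (A : Matrix (Fin m) (Fin m) ℝ) :
    Matrix (Fin m) (Fin r) ℝ :=
  A.submatrix id (Fin.castLE h)

def tailCols {m : ℕ} (r : ℕ) (h : r ≤ m) (A : Matrix (Fin m) (Fin m) ℝ) :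
    Matrix (Fin m) (Fin (m - r)) ℝ :=
  A.submatrix id fun j => Fin.cast (Nat.add_sub_cancel' h) (Fin.natAdd r j)

open scoped MatrixOrder in
lemma exists_psd_sqrt {p : ℕ} (A : Matrix (Fin p) (Fin p) ℝ) (hA : A.PosSemidef) :
    ∃ S : Matrix (Fin p) (Fin p) ℝ, S.PosSemidef ∧ S * S = A :=
  ⟨CFC.sqrt A, Matrix.nonneg_iff_posSemidef.mp (CFC.sqrt_nonneg A),
    CFC.sqrt_mul_sqrt_self A (Matrix.nonneg_iff_posSemidef.mpr hA)⟩

section aux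
open scoped Matrix.Norms.L2Operator

lemma spec_eq {m n : ℕ} (A : Matrix (Fin m) (Fin n) ℝ) : specNorm A = ‖A‖ := rfl

lemma nT {m n : ℕ} (A : Matrix (Fin m) (Fin n) ℝ) : ‖Aᵀ‖ = ‖A‖ := by
  rw [← Matrix.conjTranspose_eq_transpose_of_trivial]; exact l2_opNorm_conjTranspose A

lemma nTm {m n : ℕ} (A : Matrix (Fin m) (Fin n) ℝ) : ‖Aᵀ * A‖ = ‖A‖ ^ 2 := by
  rw [← Matrix.conjTranspose_eq_transpose_of_trivial, l2_opNorm_conjTranspose_mul_self, sq]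

lemma nmT {m n : ℕ} (A : Matrix (Fin m) (Fin n) ℝ) : ‖A * Aᵀ‖ = ‖A‖ ^ 2 := by
  have := nTm Aᵀ
  rwa [transpose_transpose, nT] at this

lemma n_one {n : ℕ} : ‖(1 : Matrix (Fin n) (Fin n) ℝ)‖ ≤ 1 := by
  rw [← diagonal_one, l2_opNorm_diagonal, pi_norm_le_iff_of_nonneg zero_le_one]
  simp

lemma n_iso {m n : ℕ} {A : Matrix (Fin m) (Fin n) ℝ} (h : Aᵀ * A = 1) : ‖A‖ ≤ 1 := by
  have h1 := nTm A
  rw [h] at h1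
  have := n_one (n := n)
  rw [h1] at this
  nlinarith [norm_nonneg A]

lemma n_mul_le {m n l : ℕ} {A : Matrix (Fin m) (Fin n) ℝ} {B : Matrix (Fin n) (Fin l) ℝ} {a b : ℝ}
    (ha : ‖A‖ ≤ a) (hb : ‖B‖ ≤ b) : ‖A * B‖ ≤ a * b :=
  (l2_opNorm_mul A B).trans (mul_le_mul ha hb (norm_nonneg _) ((norm_nonneg _).trans ha))

lemma n_isoT {m n : ℕ} {A : Matrix (Fin m) (Fin n) ℝ} (h : Aᵀ * A = 1) : ‖Aᵀ‖ ≤ 1 := by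
  rw [nT]; exact n_iso h

lemma n_isol {m n l : ℕ} {A : Matrix (Fin m) (Fin n) ℝ} (h : ‖A‖ ≤ 1) (B : Matrix (Fin n) (Fin l) ℝ) :
    ‖A * B‖ ≤ ‖B‖ := by
  simpa using n_mul_le h le_rfl

lemma n_isor {m n l : ℕ} {A : Matrix (Fin m) (Fin n) ℝ} (h : ‖A‖ ≤ 1) (B : Matrix (Fin l) (Fin m) ℝ) :
    ‖B * A‖ ≤ ‖B‖ := by
  simpa using n_mul_le le_rfl h

lemma vnorm {n : ℕ} (v : Fin n → ℝ) : ‖WithLp.toLp 2 v‖ ^ 2 = v ⬝ᵥ v := by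
  rw [EuclideanSpace.norm_sq_eq]
  simp [dotProduct, sq]

lemma vle {m n : ℕ} (A : Matrix (Fin m) (Fin n) ℝ) (v : Fin n → ℝ) :
    ‖WithLp.toLp 2 (A *ᵥ v)‖ ≤ ‖A‖ * ‖WithLp.toLp 2 v‖ :=
  l2_opNorm_mulVec A (WithLp.toLp 2 v)

lemma vcs {n : ℕ} (u v : Fin n → ℝ) :
    u ⬝ᵥ v ≤ ‖WithLp.toLp 2 u‖ * ‖WithLp.toLp 2 v‖ := by
  have := real_inner_le_norm (WithLp.toLp 2 v) (WithLp.toLp 2 u)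
  rw [EuclideanSpace.inner_toLp_toLp] at this
  simp at this
  linarith

lemma exists_max {m n : ℕ} (hn : 0 < n) (A : Matrix (Fin m) (Fin n) ℝ) :
    ∃ v : Fin n → ℝ, ‖WithLp.toLp 2 v‖ = 1 ∧ ‖WithLp.toLp 2 (A *ᵥ v)‖ = ‖A‖ := by
  let T := (Matrix.toEuclideanLin A).toContinuousLinearMap
  have hne : (Metric.sphere (0 : EuclideanSpace ℝ (Fin n)) 1).Nonempty := by
    refine ⟨EuclideanSpace.single ⟨0, hn⟩ 1, ?_⟩
    simp
  obtain ⟨x, hx, hmax⟩ := (isCompact_sphere (0 : EuclideanSpace ℝ (Fin n)) 1).exists_isMaxOn hne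
    (f := fun x => ‖T x‖) (by fun_prop)
  have hx1 : ‖x‖ = 1 := by simpa using hx
  refine ⟨x.ofLp, hx1, ?_⟩
  change ‖T x‖ = ‖T‖
  apply le_antisymm
  · have := T.le_opNorm x
    rwa [hx1, mul_one] at this
  · refine T.opNorm_le_of_unit_norm (norm_nonneg _) ?_
    intro y hy
    exact hmax (by simpa using hy)

lemma sylv {p q : ℕ} (s : Fin p → ℝ) (σ : ℝ) (hs : ∀ i, σ ≤ s i)
    (K : Matrix (Fin q) (Fin q) ℝ) (hK : K.PosSemidef) (Z : Matrix (Fin p) (Fin q) ℝ) :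
    σ * ‖Z‖ ≤ ‖diagonal s * Z + Z * K‖ := by
  rcases Nat.eq_zero_or_pos q with hq | hq
  · subst hq
    have : Z = 0 := by ext i j; exact j.elim0
    rw [this]; simp
  rcases (norm_nonneg Z).eq_or_lt with h0 | h0
  · rw [← h0, mul_zero]; exact norm_nonneg _
  obtain ⟨v, hv, hZv⟩ := exists_max hq Z
  set z := ‖Z‖ with hz
  have hvv : v ⬝ᵥ v = 1 := by rw [← vnorm, hv]; norm_num
  have huu : (Z *ᵥ v) ⬝ᵥ (Z *ᵥ v) = z ^ 2 := by rw [← vnorm, hZv]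
  have hB : ‖WithLp.toLp 2 (Zᵀ *ᵥ (Z *ᵥ v))‖ ≤ z * z := by
    have := vle Zᵀ (Z *ᵥ v)
    rwa [nT, hZv] at this
  have hB2 : (Zᵀ *ᵥ (Z *ᵥ v)) ⬝ᵥ (Zᵀ *ᵥ (Z *ᵥ v)) ≤ (z * z) ^ 2 := by
    rw [← vnorm]; gcongr
  have hcross : (Zᵀ *ᵥ (Z *ᵥ v)) ⬝ᵥ v = z ^ 2 := by
    rw [← huu, mulVec_transpose, ← dotProduct_mulVec]
  have hsv : Zᵀ *ᵥ (Z *ᵥ v) = z ^ 2 • v := by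
    have h3 : (Zᵀ *ᵥ (Z *ᵥ v) - z ^ 2 • v) ⬝ᵥ (Zᵀ *ᵥ (Z *ᵥ v) - z ^ 2 • v) ≤ 0 := by
      rw [sub_dotProduct, dotProduct_sub, dotProduct_sub, dotProduct_smul, smul_dotProduct,
        smul_dotProduct, dotProduct_smul, hcross, dotProduct_comm v, hcross, hvv]
      simp only [smul_eq_mul]
      nlinarith
    have h4 := dotProduct_self_eq_zero.mp (le_antisymm h3 (by rw [← vnorm]; positivity))
    exact sub_eq_zero.mp h4
  have hup : (Z *ᵥ v) ⬝ᵥ ((diagonal s * Z + Z * K) *ᵥ v) ≤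
      z * (‖diagonal s * Z + Z * K‖ * 1) := by
    refine (vcs _ _).trans ?_
    rw [hZv]
    have := vle (diagonal s * Z + Z * K) v
    rw [hv] at this
    gcongr
  have hlow : σ * z ^ 2 ≤ (Z *ᵥ v) ⬝ᵥ ((diagonal s * Z + Z * K) *ᵥ v) := by
    rw [add_mulVec, dotProduct_add, ← mulVec_mulVec, ← mulVec_mulVec]
    have h1 : (Z *ᵥ v) ⬝ᵥ (Z *ᵥ (K *ᵥ v)) = z ^ 2 * (v ⬝ᵥ (K *ᵥ v)) := by
      rw [dotProduct_mulVec, ← mulVec_transpose, hsv, smul_dotProduct, smul_eq_mul]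
    have h2 : 0 ≤ v ⬝ᵥ (K *ᵥ v) := by simpa using hK.dotProduct_mulVec_nonneg v
    have h3 : σ * z ^ 2 ≤ (Z *ᵥ v) ⬝ᵥ (diagonal s *ᵥ (Z *ᵥ v)) := by
      rw [← huu, dotProduct, dotProduct, Finset.mul_sum]
      apply Finset.sum_le_sum
      intro i _
      rw [mulVec_diagonal]
      nlinarith [hs i, mul_self_nonneg ((Z *ᵥ v) i)]
    rw [h1]
    have := mul_nonneg (sq_nonneg z) h2
    linarith
  have : z * (σ * z) ≤ z * ‖diagonal s * Z + Z * K‖ := by linarith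
  exact le_of_mul_le_mul_left this h0

lemma polar {p : ℕ} (A : Matrix (Fin p) (Fin p) ℝ) (δ : ℝ) (h : ‖1 - Aᵀ * A‖ ≤ δ) (hδ : δ < 1) :
    ∃ W : Matrix (Fin p) (Fin p) ℝ, Wᵀ * W = 1 ∧ ‖A - W‖ ≤ δ ∧ ‖1 - A * Aᵀ‖ ≤ δ := by
  obtain ⟨S, hS, hSS⟩ := exists_psd_sqrt (Aᵀ * A)
    (by simpa using posSemidef_conjTranspose_mul_self A)
  have hST : Sᵀ = S := by simpa using hS.isHermitian.eq
  have hu : IsUnit (S * S) := by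
    rw [hSS]
    have := isUnit_one_sub_of_norm_lt_one (h.trans_lt hδ)
    simpa using this
  have hdet : IsUnit S.det := by
    have := (Matrix.isUnit_iff_isUnit_det _).mp hu
    rw [det_mul] at this
    exact isUnit_of_mul_isUnit_left this
  have hW : (A * S⁻¹)ᵀ * (A * S⁻¹) = 1 := by
    rw [transpose_mul, transpose_nonsing_inv, hST]
    calc S⁻¹ * Aᵀ * (A * S⁻¹) = S⁻¹ * (Aᵀ * A) * S⁻¹ := by simp only [Matrix.mul_assoc]
      _ = (S⁻¹ * S) * (S * S⁻¹) := by rw [← hSS]; simp only [Matrix.mul_assoc]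
      _ = 1 := by rw [nonsing_inv_mul _ hdet, mul_nonsing_inv _ hdet, one_mul]
  have hA : A = (A * S⁻¹) * S := by
    rw [Matrix.mul_assoc, nonsing_inv_mul _ hdet, Matrix.mul_one]
  generalize A * S⁻¹ = W at hW hA
  have hS1 : ‖1 - S‖ ≤ δ := by
    have := sylv (fun _ : Fin p => (1 : ℝ)) 1 (fun _ => le_rfl) S hS (1 - S)
    rw [show (diagonal fun _ : Fin p => (1 : ℝ)) = 1 from diagonal_one,
      show (1 : Matrix (Fin p) (Fin p) ℝ) * (1 - S) + (1 - S) * S = 1 - S * S by noncomm_ring,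
      hSS, one_mul] at this
    exact this.trans h
  refine ⟨W, hW, ?_, ?_⟩
  · have : A - W = - (W * (1 - S)) := by rw [Matrix.mul_sub, ← hA]; simp
    rw [this, norm_neg]
    exact (n_isol (n_iso hW) _).trans hS1
  · have hW' : W * Wᵀ = 1 := mul_eq_one_comm.mp hW
    have : 1 - A * Aᵀ = W * ((1 - Aᵀ * A) * Wᵀ) := by
      rw [← hSS, Matrix.sub_mul, Matrix.mul_sub, Matrix.one_mul, hW', hA, transpose_mul, hST]
      simp only [Matrix.mul_assoc]
    rw [this]
    exact (n_isol (n_iso hW) _).trans ((n_isor (n_isoT hW) _).trans h)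

end aux

lemma sum_split {r m : ℕ} (h : r ≤ m) (f : Fin m → ℝ) :
    ∑ i, f i = ∑ i : Fin r, f (Fin.castLE h i) +
      ∑ j : Fin (m - r), f (Fin.cast (Nat.add_sub_cancel' h) (Fin.natAdd r j)) := by
  rw [← (finCongr (Nat.add_sub_cancel' h)).sum_comp f, Fin.sum_univ_add]
  rfl

lemma split_facts {k r : ℕ} (h : r ≤ k) (V : Matrix (Fin k) (Fin k) ℝ) (hV : Vᵀ * V = 1)
    (s : Fin k → ℝ) (hzero : ∀ i : Fin k, r ≤ (i : ℕ) → s i = 0)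
    (H : Matrix (Fin k) (Fin k) ℝ) (hH : H = V * diagonal s * Vᵀ) :
    (headCols r h V)ᵀ * headCols r h V = 1 ∧ (tailCols r h V)ᵀ * tailCols r h V = 1 ∧
    (headCols r h V)ᵀ * tailCols r h V = 0 ∧
    headCols r h V * (headCols r h V)ᵀ + tailCols r h V * (tailCols r h V)ᵀ = 1 ∧
    H * headCols r h V = headCols r h V * diagonal (fun i => s (Fin.castLE h i)) ∧
    H * tailCols r h V = 0 := by
  have hHV : H * V = V * diagonal s := by
    rw [hH, Matrix.mul_assoc, hV, Matrix.mul_one]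
  have e : ∀ i j, ∑ l, V l i * V l j = if i = j then 1 else 0 := by
    intro i j
    have := congrFun (congrFun hV i) j
    simpa [Matrix.mul_apply, Matrix.one_apply] using this
  have e2 : ∀ i j, ∑ l, H i l * V l j = V i j * s j := by
    intro i j
    have := congrFun (congrFun hHV i) j
    rw [mul_diagonal, mul_apply] at this
    exact this
  refine ⟨?_, ?_, ?_, ?_, ?_, ?_⟩
  · ext i j
    simp only [headCols, mul_apply, transpose_apply, submatrix_apply, id, e, one_apply]
    simp
  · ext i j
    simp only [tailCols, mul_apply, transpose_apply, submatrix_apply, id, e, one_apply]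
    simp
  · ext i j
    simp only [headCols, tailCols, mul_apply, transpose_apply, submatrix_apply, id, e, Matrix.zero_apply]
    rw [if_neg]
    intro hh
    have := congrArg Fin.val hh
    simp at this
    have := i.2
    omega
  · have hV' : V * Vᵀ = 1 := mul_eq_one_comm.mp hV
    rw [← hV']
    ext i j
    simp only [headCols, tailCols, Matrix.add_apply, mul_apply, transpose_apply, submatrix_apply, id]
    rw [sum_split h]
  · ext i j
    rw [mul_diagonal]
    simp only [headCols, mul_apply, submatrix_apply, id, e2]
  · ext i j
    simp only [tailCols, mul_apply, submatrix_apply, id, e2, Matrix.zero_apply]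
    rw [hzero _ (by simp), mul_zero]

lemma compl_facts {n k : ℕ} (hkn : k ≤ n) (X : Matrix (Fin n) (Fin k) ℝ)
    (Xp : Matrix (Fin n) (Fin (n - k)) ℝ) (hX : Xᵀ * X = 1)
    (hXp : Xpᵀ * Xp = 1) (hXXp : Xᵀ * Xp = 0) : X * Xᵀ + Xp * Xpᵀ = 1 := by
  have hXpX : Xpᵀ * X = 0 := by
    have := congrArg transpose hXXp
    simpa using this
  have e : Fin k ⊕ Fin (n - k) ≃ Fin n :=
    finSumFinEquiv.trans (finCongr (Nat.add_sub_cancel' hkn))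
  have h1 : fromRows Xᵀ Xpᵀ * fromCols X Xp = 1 := by
    rw [fromRows_mul_fromCols, hX, hXp, hXXp, hXpX, fromBlocks_one]
  have h2 := (mul_eq_one_comm_of_equiv e).mp h1
  rwa [fromCols_mul_fromRows] at h2

section aux2
open scoped Matrix.Norms.L2Operator

/-- the algebraic final assembly -/
lemma assemble {n k r q : ℕ} (X Xt : Matrix (Fin n) (Fin k) ℝ)
    (hX : Xᵀ * X = 1) (e b : ℝ) (hb : 0 ≤ b)
    (P : Matrix (Fin k) (Fin r) ℝ) (T : Matrix (Fin k) (Fin q) ℝ)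
    (hP : Pᵀ * P = 1) (hT : Tᵀ * T = 1) (hPT : Pᵀ * T = 0) (hPP : P * Pᵀ + T * Tᵀ = 1)
    (W : Matrix (Fin q) (Fin q) ℝ)
    (hN : ‖Xt - X * (Xᵀ * Xt)‖ ≤ e)
    (h1 : ‖(Xᵀ * Xt - 1) * P‖ ≤ 4 * b) (h12 : ‖Pᵀ * (Xᵀ * Xt) * T‖ ^ 2 ≤ 6 * b ^ 2)
    (h22 : ‖Tᵀ * (Xᵀ * Xt) * T - W‖ ^ 2 ≤ 7 * b ^ 2) :
    ‖Xt - (X * P * Pᵀ + X * T * W * Tᵀ)‖ ≤ e + 6 * b := by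
  generalize hC : Xᵀ * Xt = C at *
  have hTP : Tᵀ * P = 0 := by
    have := congrArg transpose hPT
    simpa using this
  have hB : ‖C * T - T * W‖ ^ 2 ≤ 13 * b ^ 2 := by
    have h : C * T - T * W = P * (Pᵀ * C * T) + T * (Tᵀ * C * T - W) := by
      calc C * T - T * W = (P * Pᵀ + T * Tᵀ) * (C * T) - T * W := by rw [hPP, Matrix.one_mul]
        _ = _ := by
          simp only [Matrix.mul_sub, Matrix.add_mul, Matrix.mul_assoc]; abel
    generalize Pᵀ * C * T = A at *
    generalize Tᵀ * C * T - W = B at *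
    have h' : (C * T - T * W)ᵀ * (C * T - T * W) = Aᵀ * A + Bᵀ * B := by
      rw [h, transpose_add, transpose_mul, transpose_mul, Matrix.add_mul, Matrix.mul_add,
        Matrix.mul_add]
      have e1 : Aᵀ * Pᵀ * (P * A) = Aᵀ * (Pᵀ * P) * A := by simp only [Matrix.mul_assoc]
      have e2 : Aᵀ * Pᵀ * (T * B) = Aᵀ * (Pᵀ * T) * B := by simp only [Matrix.mul_assoc]
      have e3 : Bᵀ * Tᵀ * (P * A) = Bᵀ * (Tᵀ * P) * A := by simp only [Matrix.mul_assoc]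
      have e4 : Bᵀ * Tᵀ * (T * B) = Bᵀ * (Tᵀ * T) * B := by simp only [Matrix.mul_assoc]
      rw [e1, e2, e3, e4, hP, hT, hPT, hTP]
      simp
    rw [← nTm, h']
    refine (norm_add_le _ _).trans ?_
    rw [nTm, nTm]; linarith
  have hCU : ‖C - (P * Pᵀ + T * W * Tᵀ)‖ ^ 2 ≤ 29 * b ^ 2 := by
    have h : C - (P * Pᵀ + T * W * Tᵀ) = (C - 1) * P * Pᵀ + (C * T - T * W) * Tᵀ := by
      calc C - (P * Pᵀ + T * W * Tᵀ) = C * (P * Pᵀ + T * Tᵀ) - (P * Pᵀ + T * W * Tᵀ) := by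
            rw [hPP, Matrix.mul_one]
        _ = _ := by
          simp only [Matrix.sub_mul, Matrix.mul_add, Matrix.mul_assoc, Matrix.one_mul]; abel
    generalize (C - 1) * P = A at *
    generalize C * T - T * W = B at *
    have h' : (C - (P * Pᵀ + T * W * Tᵀ)) * (C - (P * Pᵀ + T * W * Tᵀ))ᵀ = A * Aᵀ + B * Bᵀ := by
      rw [h, transpose_add, transpose_mul, transpose_mul, Matrix.add_mul, Matrix.mul_add,
        Matrix.mul_add, transpose_transpose, transpose_transpose]
      have e1 : A * Pᵀ * (P * Aᵀ) = A * (Pᵀ * P) * Aᵀ := by simp only [Matrix.mul_assoc]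
      have e2 : A * Pᵀ * (T * Bᵀ) = A * (Pᵀ * T) * Bᵀ := by simp only [Matrix.mul_assoc]
      have e3 : B * Tᵀ * (P * Aᵀ) = B * (Tᵀ * P) * Aᵀ := by simp only [Matrix.mul_assoc]
      have e4 : B * Tᵀ * (T * Bᵀ) = B * (Tᵀ * T) * Bᵀ := by simp only [Matrix.mul_assoc]
      rw [e1, e2, e3, e4, hP, hT, hPT, hTP]
      simp
    rw [← nmT, h']
    refine (norm_add_le _ _).trans ?_
    rw [nmT, nmT]
    nlinarith [norm_nonneg A]
  have hCU' : ‖C - (P * Pᵀ + T * W * Tᵀ)‖ ≤ 6 * b := by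
    apply le_of_sq_le_sq _ (by positivity)
    nlinarith
  have h : Xt - (X * P * Pᵀ + X * T * W * Tᵀ) =
      (Xt - X * C) + X * (C - (P * Pᵀ + T * W * Tᵀ)) := by
    simp only [Matrix.mul_sub, Matrix.mul_add, Matrix.mul_assoc]; abel
  rw [h]
  exact (norm_add_le _ _).trans (add_le_add hN ((n_isol (n_iso hX) _).trans hCU'))

/-- case of the maximum attained by `σ` -/
lemma case_s {k r q : ℕ} (H Ht C : Matrix (Fin k) (Fin k) ℝ) (hHt : Ht.PosSemidef)
    (a e d σ : ℝ) (ha : 1 ≤ a) (he : 0 ≤ e) (he1 : e ≤ 1) (hσ : 0 < σ) (had : d = a * σ)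
    (P : Matrix (Fin k) (Fin r) ℝ) (T : Matrix (Fin k) (Fin q) ℝ)
    (hP : Pᵀ * P = 1) (hT : Tᵀ * T = 1) (hPT : Pᵀ * T = 0)
    (s : Fin r → ℝ) (hs : ∀ i, σ ≤ s i)
    (hPH : Pᵀ * H = diagonal s * Pᵀ)
    (hF : ‖H * C - Ht‖ ≤ d * e) (hG : ‖C * Ht - H‖ ≤ d * e)
    (hC : ‖C‖ ≤ 1) (hCC : ‖1 - C * Cᵀ‖ ≤ e ^ 2) :
    ‖(C - 1) * P‖ ≤ 4 * (a * e) ∧ ‖Pᵀ * C * T‖ ^ 2 ≤ 6 * (a * e) ^ 2 := by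
  have hZ : ‖Pᵀ * (C - 1)‖ ≤ 2 * (a * e) := by
    have := sylv s σ hs Ht hHt (Pᵀ * (C - 1))
    have h : diagonal s * (Pᵀ * (C - 1)) + Pᵀ * (C - 1) * Ht =
        Pᵀ * ((H * C - Ht) + (C * Ht - H)) := by
      rw [← Matrix.mul_assoc, ← hPH]
      simp only [Matrix.mul_sub, Matrix.sub_mul, Matrix.mul_add, Matrix.mul_assoc, Matrix.one_mul,
        Matrix.mul_one]
      abel
    rw [h] at this
    have h2 := this.trans ((n_isol (n_isoT hP) _).trans ((norm_add_le _ _).trans (add_le_add hF hG)))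
    rw [had] at h2
    have h3 : σ * ‖Pᵀ * (C - 1)‖ ≤ σ * (2 * (a * e)) := by linarith
    exact le_of_mul_le_mul_left h3 hσ
  constructor
  · have h : (C - 1) * P = -((1 - C * Cᵀ) * P) - C * (Pᵀ * (C - 1))ᵀ := by
      rw [transpose_mul, transpose_sub, transpose_transpose, transpose_one]
      simp only [Matrix.mul_sub, Matrix.sub_mul, Matrix.mul_assoc, Matrix.one_mul]
      abel
    rw [h]
    refine (norm_sub_le _ _).trans ?_
    rw [norm_neg]
    have h1 := (n_isor (n_iso hP) (1 - C * Cᵀ)).trans hCC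
    have h2 := n_isol hC (Pᵀ * (C - 1))ᵀ
    rw [nT] at h2
    nlinarith
  · have h : Pᵀ * C * T = Pᵀ * (C - 1) * T := by
      rw [Matrix.mul_sub, Matrix.sub_mul, Matrix.mul_one, hPT, sub_zero]
    have h1 := (n_isor (n_iso hT) (Pᵀ * (C - 1))).trans hZ
    rw [h]
    nlinarith [norm_nonneg (Pᵀ * (C - 1) * T)]

/-- case of the maximum attained by `σ̃` -/
lemma case_st {k r q q' : ℕ} (H Ht C : Matrix (Fin k) (Fin k) ℝ) (hH : H.PosSemidef)
    (hHtS : Htᵀ = Ht)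
    (a e d σ : ℝ) (ha : 1 ≤ a) (he : 0 ≤ e) (hσ : 0 < σ) (had : d = a * σ)
    (hsmall : 7 * (a * e) ^ 2 < 1)
    (P : Matrix (Fin k) (Fin r) ℝ) (T : Matrix (Fin k) (Fin q) ℝ)
    (hP : Pᵀ * P = 1) (hT : Tᵀ * T = 1) (hPP : P * Pᵀ + T * Tᵀ = 1)
    (Pt : Matrix (Fin k) (Fin r) ℝ) (Tt : Matrix (Fin k) (Fin q') ℝ)
    (hPt : Ptᵀ * Pt = 1) (hTt : Ttᵀ * Tt = 1) (hPPt : Pt * Ptᵀ + Tt * Ttᵀ = 1)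
    (s : Fin r → ℝ) (hs : ∀ i, σ ≤ s i)
    (hHT : H * T = 0) (hTH : Tᵀ * H = 0) (hHP : Ht * Pt = Pt * diagonal s)
    (hF : ‖H * C - Ht‖ ≤ d * e) (hG : ‖C * Ht - H‖ ≤ d * e)
    (hC : ‖C‖ ≤ 1) (hCC : ‖1 - C * Cᵀ‖ ≤ e ^ 2) (hCC' : ‖1 - Cᵀ * C‖ ≤ e ^ 2) :
    ‖(C - 1) * P‖ ≤ 4 * (a * e) ∧ ‖Pᵀ * C * T‖ ^ 2 ≤ 6 * (a * e) ^ 2 := by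
  have hae : 0 ≤ a * e := by positivity
  have heae : e ≤ a * e := by nlinarith
  have hPHt : diagonal s * Ptᵀ = Ptᵀ * Ht := by
    have := congrArg transpose hHP
    rw [transpose_mul, transpose_mul, hHtS, diagonal_transpose] at this
    exact this.symm
  have hPd : Pt * diagonal s = Ht * Pt := hHP.symm
  have hHS : Hᵀ = H := by simpa using hH.isHermitian.eq
  -- the three Sylvester bounds
  have hZ : ‖(C - 1) * Pt‖ ≤ 2 * (a * e) := by
    have := sylv s σ hs H hH ((C - 1) * Pt)ᵀ
    have h : diagonal s * ((C - 1) * Pt)ᵀ + ((C - 1) * Pt)ᵀ * H =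
        (((H * C - Ht) + (C * Ht - H)) * Pt)ᵀ := by
      have h' : ((H * C - Ht) + (C * Ht - H)) * Pt =
          ((C - 1) * Pt) * diagonal s + H * ((C - 1) * Pt) := by
        rw [Matrix.mul_assoc, hPd]
        simp only [Matrix.mul_sub, Matrix.sub_mul, Matrix.add_mul, Matrix.mul_assoc, Matrix.one_mul]
        abel
      rw [h', transpose_add, transpose_mul _ (diagonal s), diagonal_transpose,
        transpose_mul H, hHS]
    rw [h, nT, nT] at this
    have h2 := this.trans ((n_isor (n_iso hPt) _).trans ((norm_add_le _ _).trans (add_le_add hF hG)))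
    rw [had] at h2
    have h3 : σ * ‖(C - 1) * Pt‖ ≤ σ * (2 * (a * e)) := by linarith
    exact le_of_mul_le_mul_left h3 hσ
  have hTCP : ‖Tᵀ * C * Pt‖ ≤ a * e := by
    have := sylv s σ hs 0 PosSemidef.zero (Tᵀ * C * Pt)ᵀ
    have h : diagonal s * (Tᵀ * C * Pt)ᵀ + (Tᵀ * C * Pt)ᵀ * (0 : Matrix (Fin q) (Fin q) ℝ) =
        (Tᵀ * ((C * Ht - H) * Pt))ᵀ := by
      have h' : Tᵀ * ((C * Ht - H) * Pt) = Tᵀ * C * Pt * diagonal s := by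
        rw [Matrix.mul_assoc _ Pt, hPd, Matrix.sub_mul, Matrix.mul_sub, ← Matrix.mul_assoc Tᵀ H,
          hTH]
        simp only [Matrix.mul_assoc, Matrix.zero_mul, sub_zero]
      rw [h', transpose_mul _ (diagonal s), diagonal_transpose, Matrix.mul_zero, add_zero]
    rw [h, nT, nT] at this
    have h2 := this.trans ((n_isol (n_isoT hT) _).trans ((n_isor (n_iso hPt) _).trans hG))
    rw [had] at h2
    have h3 : σ * ‖Tᵀ * C * Pt‖ ≤ σ * (a * e) := by linarith
    exact le_of_mul_le_mul_left h3 hσ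
  have hTP : ‖Ptᵀ * T‖ ≤ a * e := by
    have := sylv s σ hs 0 PosSemidef.zero (Ptᵀ * T)
    have h : diagonal s * (Ptᵀ * T) + (Ptᵀ * T) * (0 : Matrix (Fin q) (Fin q) ℝ) =
        -(Ptᵀ * ((H * C - Ht)ᵀ * T)) := by
      rw [← Matrix.mul_assoc, hPHt, transpose_sub, transpose_mul, hHS, hHtS, Matrix.sub_mul,
        Matrix.mul_assoc Cᵀ, hHT]
      simp [Matrix.mul_assoc]
    rw [h, norm_neg] at this
    have h2 := this.trans ((n_isol (n_isoT hPt) _).trans (n_isor (n_iso hT) _))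
    rw [nT] at h2
    have h3 : σ * ‖Ptᵀ * T‖ ≤ σ * (a * e) := by rw [had] at hF; linarith
    exact le_of_mul_le_mul_left h3 hσ
  -- transfer
  have hTtP : ‖Ttᵀ * P‖ ≤ a * e := by
    have h : 1 - (Pᵀ * Pt)ᵀ * (Pᵀ * Pt) = (Ptᵀ * T) * (Ptᵀ * T)ᵀ := by
      calc 1 - (Pᵀ * Pt)ᵀ * (Pᵀ * Pt) =
          Ptᵀ * ((P * Pᵀ + T * Tᵀ) * Pt) - (Pᵀ * Pt)ᵀ * (Pᵀ * Pt) := by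
            rw [hPP, Matrix.one_mul, hPt]
        _ = _ := by
            simp only [transpose_mul, transpose_transpose, Matrix.add_mul, Matrix.mul_add,
              Matrix.mul_assoc]
            abel
    have h' : 1 - (Pᵀ * Pt) * (Pᵀ * Pt)ᵀ = (Ttᵀ * P)ᵀ * (Ttᵀ * P) := by
      calc 1 - (Pᵀ * Pt) * (Pᵀ * Pt)ᵀ =
          Pᵀ * ((Pt * Ptᵀ + Tt * Ttᵀ) * P) - (Pᵀ * Pt) * (Pᵀ * Pt)ᵀ := by
            rw [hPPt, Matrix.one_mul, hP]
        _ = _ := by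
            simp only [transpose_mul, transpose_transpose, Matrix.add_mul, Matrix.mul_add,
              Matrix.mul_assoc]
            abel
    obtain ⟨-, -, -, h3⟩ := polar (Pᵀ * Pt) ((a * e) ^ 2)
      (by rw [h, nmT]; gcongr) (by nlinarith)
    rw [h', nTm] at h3
    exact le_of_sq_le_sq h3 hae
  have hPtP : ‖Ptᵀ * P‖ ≤ 1 := (n_isol (n_isoT hPt) _).trans (n_iso hP)
  have hsplit : P = Pt * (Ptᵀ * P) + Tt * (Ttᵀ * P) := by
    rw [← Matrix.mul_assoc, ← Matrix.mul_assoc, ← Matrix.add_mul, hPPt, Matrix.one_mul]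
  have hC1 : ‖C - 1‖ ≤ 2 := by
    refine (norm_sub_le _ _).trans ?_
    have := n_one (n := k)
    linarith
  constructor
  · have h : (C - 1) * P = (C - 1) * Pt * (Ptᵀ * P) + (C - 1) * Tt * (Ttᵀ * P) := by
      conv_lhs => rw [hsplit]
      simp only [Matrix.mul_add, Matrix.mul_assoc]
    rw [h]
    refine (norm_add_le _ _).trans ?_
    have h1 := n_mul_le hZ hPtP
    have h2 := n_mul_le ((n_isor (n_iso hTt) (C - 1)).trans hC1) hTtP
    linarith
  · have h21 : ‖Tᵀ * C * P‖ ≤ 2 * (a * e) := by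
      have h : Tᵀ * C * P = Tᵀ * C * Pt * (Ptᵀ * P) + Tᵀ * C * Tt * (Ttᵀ * P) := by
        conv_lhs => rw [hsplit]
        simp only [Matrix.mul_add, Matrix.mul_assoc]
      rw [h]
      refine (norm_add_le _ _).trans ?_
      have h1 := n_mul_le hTCP hPtP
      have h2 := n_mul_le ((n_isor (n_iso hTt) (Tᵀ * C)).trans
        ((n_isol (n_isoT hT) C).trans hC)) hTtP
      linarith
    have h : 1 - (Pᵀ * C * P)ᵀ * (Pᵀ * C * P) =
        Pᵀ * ((1 - Cᵀ * C) * P) + (Tᵀ * C * P)ᵀ * (Tᵀ * C * P) := by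
      calc 1 - (Pᵀ * C * P)ᵀ * (Pᵀ * C * P) =
          Pᵀ * ((1 - Cᵀ * C) * P) + Pᵀ * Cᵀ * ((P * Pᵀ + T * Tᵀ) * (C * P))
            - (Pᵀ * C * P)ᵀ * (Pᵀ * C * P) := by
            rw [hPP, Matrix.sub_mul, Matrix.mul_sub, Matrix.one_mul, Matrix.one_mul, hP]
            simp only [Matrix.mul_assoc]
            abel
        _ = _ := by
            simp only [transpose_mul, transpose_transpose, Matrix.add_mul, Matrix.mul_add,
              Matrix.mul_assoc]
            abel
    have h' : (Pᵀ * C * T) * (Pᵀ * C * T)ᵀ =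
        (1 - (Pᵀ * C * P) * (Pᵀ * C * P)ᵀ) - Pᵀ * ((1 - C * Cᵀ) * P) := by
      calc (Pᵀ * C * T) * (Pᵀ * C * T)ᵀ =
          Pᵀ * C * ((P * Pᵀ + T * Tᵀ) * (Cᵀ * P)) - (Pᵀ * C * P) * (Pᵀ * C * P)ᵀ := by
            simp only [transpose_mul, transpose_transpose, Matrix.add_mul, Matrix.mul_add,
              Matrix.mul_assoc]
            abel
        _ = _ := by
            rw [hPP, Matrix.sub_mul, Matrix.mul_sub, Matrix.one_mul, Matrix.one_mul, hP]
            simp only [Matrix.mul_assoc]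
            abel
    have hcp : ∀ M : Matrix (Fin k) (Fin k) ℝ, ‖Pᵀ * (M * P)‖ ≤ ‖M‖ := fun M =>
      (n_isol (n_isoT hP) _).trans (n_isor (n_iso hP) _)
    have hb : ‖1 - (Pᵀ * C * P)ᵀ * (Pᵀ * C * P)‖ ≤ 5 * (a * e) ^ 2 := by
      rw [h]
      refine (norm_add_le _ _).trans ?_
      rw [nTm]
      have := (hcp (1 - Cᵀ * C)).trans hCC'
      nlinarith [norm_nonneg (Tᵀ * C * P)]
    obtain ⟨-, -, -, h3⟩ := polar (Pᵀ * C * P) (5 * (a * e) ^ 2) hb (by nlinarith)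
    rw [← nmT, h']
    refine (norm_sub_le _ _).trans ?_
    have := (hcp (1 - C * Cᵀ)).trans hCC
    nlinarith

end aux2

section aux3
open scoped Matrix.Norms.L2Operator

lemma eig_le {n k : ℕ} (X D : Matrix (Fin n) (Fin k) ℝ) (V : Matrix (Fin k) (Fin k) ℝ)
    (hX : Xᵀ * X = 1) (hV : Vᵀ * V = 1) (s : Fin k → ℝ)
    (hdec : Xᵀ * D = V * Matrix.diagonal s * Vᵀ) (i : Fin k) : s i ≤ ‖D‖ := by
  have h : diagonal s = Vᵀ * (Xᵀ * D * V) := by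
    rw [hdec, Matrix.mul_assoc, hV, Matrix.mul_one, ← Matrix.mul_assoc, hV, Matrix.one_mul]
  have h1 : ‖diagonal s‖ ≤ ‖D‖ := by
    rw [h]
    exact (n_isol (n_isoT hV) _).trans ((n_isor (n_iso hV) _).trans (n_isol (n_isoT hX) _))
  rw [l2_opNorm_diagonal] at h1
  exact (le_abs_self _).trans ((norm_le_pi_norm s i).trans h1)

end aux3

set_option maxHeartbeats 2000000 in
open scoped Matrix.Norms.L2Operator in
/-- rank-deficient case, spectral norm. With XᵀD = VΣVᵀ, X̃ᵀD = ṼΣ̃Ṽᵀ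
spectral decompositions of rank r < k, and X⊥ an orthogonal completion of X, there
exists an orthogonal W ∈ 𝕆^{(k−r)×(k−r)} such that ‖X̃ − (XV₁V₁ᵀ + XV₂WV₂ᵀ)‖₂ ≤
(√2 + √(8‖D‖₂²/(σ_r + σ̃_r)² + 4‖D‖₂²/(max{σ_r, σ̃_r})²) + 4‖D‖₂/max{σ_r, σ̃_r})·‖X⊥ᵀX̃‖₂. -/
theorem rank_deficient_spec_bound {n k r : ℕ} (hr : 1 ≤ r) (hrk : r < k) (hkn : k ≤ n)
    (D X Xt : Matrix (Fin n) (Fin k) ℝ)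
    (Xp : Matrix (Fin n) (Fin (n - k)) ℝ)
    (hX : Xᵀ * X = 1) (hXt : Xtᵀ * Xt = 1)
    (hXp : Xpᵀ * Xp = 1) (hXXp : Xᵀ * Xp = 0)
    (hpsd : (Xᵀ * D).PosSemidef) (hpsdt : (Xtᵀ * D).PosSemidef)
    (hrank : (Xᵀ * D).rank = r) (hrankt : (Xtᵀ * D).rank = r)
    (V Vt : Matrix (Fin k) (Fin k) ℝ) (hV : Vᵀ * V = 1) (hVt : Vtᵀ * Vt = 1)
    (s st : Fin k → ℝ)
    (hord : ∀ i j : Fin k, i ≤ j → s j ≤ s i)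
    (hordt : ∀ i j : Fin k, i ≤ j → st j ≤ st i)
    (hpos : ∀ i : Fin k, (i : ℕ) < r → 0 < s i)
    (hpost : ∀ i : Fin k, (i : ℕ) < r → 0 < st i)
    (hzero : ∀ i : Fin k, r ≤ (i : ℕ) → s i = 0)
    (hzerot : ∀ i : Fin k, r ≤ (i : ℕ) → st i = 0)
    (hdec : Xᵀ * D = V * Matrix.diagonal s * Vᵀ)
    (hdect : Xtᵀ * D = Vt * Matrix.diagonal st * Vtᵀ) :
    ∃ W : Matrix (Fin (k - r)) (Fin (k - r)) ℝ, Wᵀ * W = 1 ∧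
      specNorm (Xt - (X * headCols r hrk.le V * (headCols r hrk.le V)ᵀ +
            X * tailCols r hrk.le V * W * (tailCols r hrk.le V)ᵀ))
        ≤ (Real.sqrt 2 +
            Real.sqrt (8 * specNorm D ^ 2 /
                (s ⟨r - 1, by omega⟩ + st ⟨r - 1, by omega⟩) ^ 2 +
              4 * specNorm D ^ 2 /
                max (s ⟨r - 1, by omega⟩) (st ⟨r - 1, by omega⟩) ^ 2) +
            4 * specNorm D / max (s ⟨r - 1, by omega⟩) (st ⟨r - 1, by omega⟩)) *
          specNorm (Xpᵀ * Xt) := by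
  obtain ⟨hP, hT, hPT, hPP, hHP, hHT⟩ := split_facts hrk.le V hV s hzero _ hdec
  obtain ⟨hPt, hTt, hPTt, hPPt, hHPt, hHTt⟩ := split_facts hrk.le Vt hVt st hzerot _ hdect
  have hN := compl_facts hkn X Xp hX hXp hXXp
  generalize headCols r hrk.le V = P at *
  generalize tailCols r hrk.le V = T at *
  generalize headCols r hrk.le Vt = Pt at *
  generalize tailCols r hrk.le Vt = Tt at *
  have hσ : 0 < s ⟨r - 1, by omega⟩ := hpos _ (by simp; omega)
  have hσt : 0 < st ⟨r - 1, by omega⟩ := hpost _ (by simp; omega)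
  have hs : ∀ i : Fin r, s ⟨r - 1, by omega⟩ ≤ s (Fin.castLE hrk.le i) := fun i =>
    hord _ _ (by rw [Fin.le_def]; simp; omega)
  have hst : ∀ i : Fin r, st ⟨r - 1, by omega⟩ ≤ st (Fin.castLE hrk.le i) := fun i =>
    hordt _ _ (by rw [Fin.le_def]; simp; omega)
  have hHS : (Xᵀ * D)ᵀ = Xᵀ * D := by simpa using hpsd.isHermitian.eq
  have hHtS : (Xtᵀ * D)ᵀ = Xtᵀ * D := by simpa using hpsdt.isHermitian.eq
  have hsd : s ⟨r - 1, by omega⟩ ≤ ‖D‖ := eig_le X D V hX hV s hdec _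
  have hstd : st ⟨r - 1, by omega⟩ ≤ ‖D‖ := eig_le Xt D Vt hXt hVt st hdect _
  simp only [spec_eq]
  generalize s ⟨r - 1, by omega⟩ = σ at *
  generalize st ⟨r - 1, by omega⟩ = τ at *
  set m := max σ τ with hm
  have hm0 : 0 < m := lt_max_of_lt_left hσ
  have hmd : m ≤ ‖D‖ := max_le hsd hstd
  set d := ‖D‖ with hd
  set e := ‖Xpᵀ * Xt‖ with he
  have he0 : 0 ≤ e := norm_nonneg _
  have he1 : e ≤ 1 := (n_isol (n_isoT hXp) _).trans (n_iso hXt)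
  obtain ⟨a, ha⟩ : ∃ a, a = d / m := ⟨_, rfl⟩
  have had : d = a * m := by rw [ha]; field_simp
  have ha1 : 1 ≤ a := by rw [ha, one_le_div hm0]; exact hmd
  have hae : 0 ≤ a * e := by positivity
  have heae : e ≤ a * e := by nlinarith
  -- reduce to a simpler bound
  suffices hmain : ∃ W : Matrix (Fin (k - r)) (Fin (k - r)) ℝ, Wᵀ * W = 1 ∧
      ‖Xt - (X * P * Pᵀ + X * T * W * Tᵀ)‖ ≤ e + 6 * (a * e) by
    obtain ⟨W, hW, hb⟩ := hmain
    refine ⟨W, hW, hb.trans ?_⟩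
    have h1 : (1 : ℝ) ≤ Real.sqrt 2 := Real.one_le_sqrt.mpr (by norm_num)
    have h2 : 2 * a ≤ Real.sqrt (8 * d ^ 2 / (σ + τ) ^ 2 + 4 * d ^ 2 / m ^ 2) := by
      apply Real.le_sqrt_of_sq_le
      have : 4 * d ^ 2 / m ^ 2 = (2 * a) ^ 2 := by rw [ha]; ring
      rw [this]
      have : 0 ≤ 8 * d ^ 2 / (σ + τ) ^ 2 := by positivity
      linarith
    have h3 : 4 * d / m = 4 * a := by rw [ha]; ring
    rw [h3]
    nlinarith
  by_cases hsmall : 7 * (a * e) ^ 2 < 1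
  swap
  · refine ⟨1, by simp, ?_⟩
    have h : X * P * Pᵀ + X * T * (1 : Matrix (Fin (k - r)) (Fin (k - r)) ℝ) * Tᵀ = X := by
      rw [Matrix.mul_one, Matrix.mul_assoc, Matrix.mul_assoc, ← Matrix.mul_add, hPP, Matrix.mul_one]
    rw [h]
    have h1 := norm_sub_le Xt X
    have h2 := n_iso hX
    have h3 := n_iso hXt
    nlinarith
  -- basic facts
  have hXt' : Xt - X * (Xᵀ * Xt) = Xp * (Xpᵀ * Xt) := by
    calc Xt - X * (Xᵀ * Xt) = (X * Xᵀ + Xp * Xpᵀ) * Xt - X * (Xᵀ * Xt) := by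
          rw [hN, Matrix.one_mul]
      _ = _ := by simp only [Matrix.add_mul, Matrix.mul_assoc]; abel
  have hNe : ‖Xt - X * (Xᵀ * Xt)‖ ≤ e := by
    rw [hXt']; exact n_isol (n_iso hXp) _
  have hCC' : ‖1 - (Xᵀ * Xt)ᵀ * (Xᵀ * Xt)‖ ≤ e ^ 2 := by
    have : 1 - (Xᵀ * Xt)ᵀ * (Xᵀ * Xt) = (Xpᵀ * Xt)ᵀ * (Xpᵀ * Xt) := by
      calc 1 - (Xᵀ * Xt)ᵀ * (Xᵀ * Xt) = Xtᵀ * (Xt - X * (Xᵀ * Xt)) := by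
            rw [Matrix.mul_sub, hXt, transpose_mul, transpose_transpose, Matrix.mul_assoc]
        _ = _ := by rw [hXt', transpose_mul, transpose_transpose, Matrix.mul_assoc]
    rw [this, nTm]
  have hCC : ‖1 - (Xᵀ * Xt) * (Xᵀ * Xt)ᵀ‖ ≤ e ^ 2 := by
    obtain ⟨-, -, -, h⟩ := polar (Xᵀ * Xt) (e ^ 2) hCC' (by nlinarith)
    exact h
  have hNX : ‖X - Xt * (Xtᵀ * X)‖ ≤ e := by
    apply le_of_sq_le_sq _ he0
    rw [← nTm]
    have : (X - Xt * (Xtᵀ * X))ᵀ * (X - Xt * (Xtᵀ * X)) = 1 - (Xᵀ * Xt) * (Xᵀ * Xt)ᵀ := by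
      have e1 : ∀ M : Matrix (Fin k) (Fin k) ℝ, Xtᵀ * (Xt * M) = M := fun M => by
        rw [← Matrix.mul_assoc, hXt, Matrix.one_mul]
      simp only [transpose_sub, transpose_mul, transpose_transpose, Matrix.sub_mul, Matrix.mul_sub,
        Matrix.mul_assoc, hX, e1]
      abel
    rw [this]; exact hCC
  have hC : ‖Xᵀ * Xt‖ ≤ 1 := (n_isol (n_isoT hX) _).trans (n_iso hXt)
  have hF : ‖Xᵀ * D * (Xᵀ * Xt) - Xtᵀ * D‖ ≤ d * e := by
    have : Xᵀ * D * (Xᵀ * Xt) - Xtᵀ * D = -(Dᵀ * (Xt - X * (Xᵀ * Xt))) := by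
      rw [← hHS, ← hHtS]
      simp only [transpose_mul, transpose_transpose, Matrix.mul_sub, Matrix.mul_assoc]
      abel
    rw [this, norm_neg]
    exact n_mul_le (nT D).le hNe
  have hG : ‖(Xᵀ * Xt) * (Xtᵀ * D) - Xᵀ * D‖ ≤ d * e := by
    have : (Xᵀ * Xt) * (Xtᵀ * D) - Xᵀ * D = -((X - Xt * (Xtᵀ * X))ᵀ * D) := by
      simp only [transpose_sub, transpose_mul, transpose_transpose, Matrix.sub_mul,
        Matrix.mul_assoc]
      abel
    rw [this, norm_neg, mul_comm d]
    exact n_mul_le ((nT _).le.trans hNX) le_rfl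
  have key : ‖(Xᵀ * Xt - 1) * P‖ ≤ 4 * (a * e) ∧ ‖Pᵀ * (Xᵀ * Xt) * T‖ ^ 2 ≤ 6 * (a * e) ^ 2 := by
    rcases le_total τ σ with hle | hle
    · have hmσ : m = σ := max_eq_left hle
      have hPH : Pᵀ * (Xᵀ * D) = diagonal (fun i => s (Fin.castLE hrk.le i)) * Pᵀ := by
        have := congrArg transpose hHP
        rwa [transpose_mul, transpose_mul _ (diagonal _), hHS, diagonal_transpose] at this
      exact case_s (Xᵀ * D) (Xtᵀ * D) (Xᵀ * Xt) hpsdt a e d σ ha1 he0 he1 hσ (hmσ ▸ had) P T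
        hP hT hPT _ hs hPH hF hG hC hCC
    · have hmσ : m = τ := max_eq_right hle
      have hTH : Tᵀ * (Xᵀ * D) = 0 := by
        have := congrArg transpose hHT
        rwa [transpose_mul, hHS, transpose_zero] at this
      exact case_st (Xᵀ * D) (Xtᵀ * D) (Xᵀ * Xt) hpsd hHtS a e d τ ha1 he0 hσt (hmσ ▸ had) hsmall
        P T hP hT hPP Pt Tt hPt hTt hPPt _ hst hHT hTH hHPt hF hG hC hCC hCC'
  obtain ⟨h1, h12⟩ := key
  have h22 : ‖1 - (Tᵀ * (Xᵀ * Xt) * T)ᵀ * (Tᵀ * (Xᵀ * Xt) * T)‖ ≤ 7 * (a * e) ^ 2 := by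
    generalize Xᵀ * Xt = C at *
    have h : 1 - (Tᵀ * C * T)ᵀ * (Tᵀ * C * T) =
        Tᵀ * ((1 - Cᵀ * C) * T) + (Pᵀ * C * T)ᵀ * (Pᵀ * C * T) := by
      calc 1 - (Tᵀ * C * T)ᵀ * (Tᵀ * C * T) =
          Tᵀ * ((1 - Cᵀ * C) * T) + Tᵀ * Cᵀ * ((P * Pᵀ + T * Tᵀ) * (C * T))
            - (Tᵀ * C * T)ᵀ * (Tᵀ * C * T) := by
            rw [hPP, Matrix.sub_mul, Matrix.mul_sub, Matrix.one_mul, Matrix.one_mul, hT]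
            simp only [Matrix.mul_assoc]
            abel
        _ = _ := by
            simp only [transpose_mul, transpose_transpose, Matrix.add_mul, Matrix.mul_add,
              Matrix.mul_assoc]
            abel
    rw [h]
    refine (norm_add_le _ _).trans ?_
    rw [nTm]
    have := (n_isol (n_isoT hT) _).trans ((n_isor (n_iso hT) (1 - Cᵀ * C)).trans hCC')
    nlinarith
  obtain ⟨W, hW, hAW, -⟩ := polar _ _ h22 hsmall
  refine ⟨W, hW, assemble X Xt hX e (a * e) hae P T hP hT hPT hPP W hNe h1 h12 ?_⟩
  have := norm_nonneg (Tᵀ * (Xᵀ * Xt) * T - W)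
  nlinarith
end

section
/- Let n ≥ k > r ≥ 1, D ∈ ℝ^{n×k}, and X, X̃ ∈ 𝕆^{n×k} with XᵀD ⪰ 0, X̃ᵀD ⪰ 0, and rank(XᵀD) = rank(X̃ᵀD) = r. Let XᵀD = VΣVᵀ and X̃ᵀD = ṼΣ̃Ṽᵀ be spectral decompositions with V, Ṽ ∈ 𝕆^{k×k}, Σ = diag(σ_1, …, σ_r, 0, …, 0), Σ̃ = diag(σ̃_1, …, σ̃_r, 0, …, 0), σ_1 ≥ … ≥ σ_r > 0, σ̃_1 ≥ … ≥ σ̃_r > 0; write V₁ = V_{(:,1:r)}, V₂ = V_{(:,r+1:k)}, Ṽ₁ = Ṽ_{(:,1:r)}, Ṽ₂ = Ṽ_{(:,r+1:k)}. Then for every W̃ ∈ 𝕆^{(k−r)×(k−r)} there exists W ∈ 𝕆^{(k−r)×(k−r)} such that ‖(X̃Ṽ₁Ṽ₁ᵀ + X̃Ṽ₂W̃Ṽ₂ᵀ) − (XV₁V₁ᵀ + XV₂WV₂ᵀ)‖_F ≤ ( √2 + 2√2·‖D‖₂/(σ_r + σ̃_r) + 4‖D‖₂/max{σ_r, σ̃_r}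 ) · √(k − ‖XᵀX̃‖_F²); hence the Hausdorff distance (in Frobenius norm) between the sets 𝕏 = { XV₁V₁ᵀ + XV₂WV₂ᵀ : W ∈ 𝕆^{(k−r)×(k−r)} } and 𝕏̃ = { X̃Ṽ₁Ṽ₁ᵀ + X̃Ṽ₂W̃Ṽ₂ᵀ : W̃ ∈ 𝕆^{(k−r)×(k−r)} } is bounded by the same right-hand side. -/
open Matrix

noncomputable def frobNorm {m n : ℕ} (A : Matrix (Fin m) (Fin n) ℝ) : ℝ :=
  Real.sqrt ((Aᵀ * A).trace)

section helpers

def fs {m n : ℕ} (A : Matrix (Fin m) (Fin n) ℝ) : ℝ := (Aᵀ * A).trace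

lemma fs_eq {m n : ℕ} (A : Matrix (Fin m) (Fin n) ℝ) : fs A = ∑ j, ∑ i, A i j ^ 2 := by
  simp [fs, Matrix.trace, Matrix.mul_apply, sq]

lemma fs_nonneg {m n : ℕ} (A : Matrix (Fin m) (Fin n) ℝ) : 0 ≤ fs A := by
  rw [fs_eq]; positivity

lemma frobNorm_def2 {m n : ℕ} (A : Matrix (Fin m) (Fin n) ℝ) : frobNorm A = √(fs A) := rfl

lemma frobNorm_sq {m n : ℕ} (A : Matrix (Fin m) (Fin n) ℝ) : frobNorm A ^ 2 = fs A :=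
  Real.sq_sqrt (fs_nonneg A)

lemma frobNorm_nonneg {m n : ℕ} (A : Matrix (Fin m) (Fin n) ℝ) : 0 ≤ frobNorm A :=
  Real.sqrt_nonneg _

lemma fs_transpose {m n : ℕ} (A : Matrix (Fin m) (Fin n) ℝ) : fs Aᵀ = fs A := by
  rw [fs, fs, Matrix.transpose_transpose, Matrix.trace_mul_comm]

lemma fs_left {m n p : ℕ} (Y : Matrix (Fin m) (Fin n) ℝ) (hY : Yᵀ * Y = 1)
    (B : Matrix (Fin n) (Fin p) ℝ) : fs (Y * B) = fs B := by
  rw [fs, fs, Matrix.transpose_mul, Matrix.mul_assoc, ← Matrix.mul_assoc Yᵀ, hY, Matrix.one_mul]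

lemma fs_right {m n p : ℕ} (Y : Matrix (Fin m) (Fin n) ℝ) (hY : Yᵀ * Y = 1)
    (B : Matrix (Fin p) (Fin n) ℝ) : fs (B * Yᵀ) = fs B := by
  rw [← fs_transpose, Matrix.transpose_mul, Matrix.transpose_transpose, fs_left Y hY, fs_transpose]

lemma trace_le {m n : ℕ} (A B : Matrix (Fin m) (Fin n) ℝ) :
    (Aᵀ * B).trace ≤ frobNorm A * frobNorm B := by
  have := Real.sum_mul_le_sqrt_mul_sqrt (Finset.univ : Finset (Fin n × Fin m))
    (fun p => A p.2 p.1) (fun p => B p.2 p.1)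
  rw [frobNorm_def2, frobNorm_def2, fs_eq, fs_eq]
  simpa [Fintype.sum_prod_type, Matrix.trace, Matrix.mul_apply] using this

lemma fs_add {m n : ℕ} (A B : Matrix (Fin m) (Fin n) ℝ) :
    fs (A + B) = fs A + 2 * (Aᵀ * B).trace + fs B := by
  simp only [fs, Matrix.transpose_add, Matrix.add_mul, Matrix.mul_add, Matrix.trace_add]
  have : (Bᵀ * A).trace = (Aᵀ * B).trace := by
    rw [← Matrix.trace_transpose, Matrix.transpose_mul, Matrix.transpose_transpose]
  rw [this]; ring

lemma fs_sub {m n : ℕ} (A B : Matrix (Fin m) (Fin n) ℝ) :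
    fs (A - B) = fs A - 2 * (Aᵀ * B).trace + fs B := by
  simp only [fs, Matrix.transpose_sub, Matrix.sub_mul, Matrix.mul_sub, Matrix.trace_sub]
  have : (Bᵀ * A).trace = (Aᵀ * B).trace := by
    rw [← Matrix.trace_transpose, Matrix.transpose_mul, Matrix.transpose_transpose]
  rw [this]; ring

lemma frobNorm_add_le {m n : ℕ} (A B : Matrix (Fin m) (Fin n) ℝ) :
    frobNorm (A + B) ≤ frobNorm A + frobNorm B := by
  have h := frobNorm_nonneg A
  have h' := frobNorm_nonneg B
  apply le_of_sq_le_sq _ (by positivity)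
  rw [frobNorm_sq, fs_add, add_sq, frobNorm_sq, frobNorm_sq]
  have := trace_le A B
  linarith

lemma specNorm_nonneg {m n : ℕ} (A : Matrix (Fin m) (Fin n) ℝ) : 0 ≤ specNorm A := norm_nonneg _

lemma specNorm_transpose {m n : ℕ} (A : Matrix (Fin m) (Fin n) ℝ) :
    specNorm Aᵀ = specNorm A := by
  have := Matrix.l2_opNorm_conjTranspose A
  rw [Matrix.l2_opNorm_def, Matrix.l2_opNorm_def] at this
  simpa [specNorm] using this

lemma fs_spec_left {m n p : ℕ} (D : Matrix (Fin m) (Fin n) ℝ) (B : Matrix (Fin n) (Fin p) ℝ) :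
    fs (D * B) ≤ specNorm D ^ 2 * fs B := by
  rw [fs_eq, fs_eq, Finset.mul_sum]
  refine Finset.sum_le_sum fun j _ => ?_
  have h := (Matrix.toEuclideanLin D).toContinuousLinearMap.le_opNorm
    (WithLp.toLp 2 (fun i => B i j))
  have h2 := pow_le_pow_left₀ (norm_nonneg _) h 2
  rw [mul_pow, EuclideanSpace.norm_sq_eq, EuclideanSpace.norm_sq_eq] at h2
  simpa [specNorm, Matrix.mul_apply, Matrix.mulVec, dotProduct] using h2

lemma fs_spec_right {m n p : ℕ} (D : Matrix (Fin m) (Fin n) ℝ) (B : Matrix (Fin p) (Fin m) ℝ) :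
    fs (B * D) ≤ specNorm D ^ 2 * fs B := by
  rw [← fs_transpose, Matrix.transpose_mul, ← specNorm_transpose D, ← fs_transpose B]
  exact fs_spec_left _ _

lemma gram_diag_nonneg {m n : ℕ} (A : Matrix (Fin m) (Fin n) ℝ) (i : Fin n) :
    0 ≤ (Aᵀ * A) i i := by
  simp only [Matrix.mul_apply, Matrix.transpose_apply, ← sq]; positivity

/-- Pythagoras for Y with orthonormal columns. -/
lemma pyth {m n p : ℕ} (Y : Matrix (Fin m) (Fin n) ℝ) (hY : Yᵀ * Y = 1)
    (Z : Matrix (Fin m) (Fin p) ℝ) :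
    (Z - Y * (Yᵀ * Z))ᵀ * (Z - Y * (Yᵀ * Z)) = Zᵀ * Z - (Yᵀ * Z)ᵀ * (Yᵀ * Z) := by
  have e : Yᵀ * (Y * (Yᵀ * Z)) = Yᵀ * Z := by rw [← Matrix.mul_assoc, hY, Matrix.one_mul]
  simp only [Matrix.transpose_sub, Matrix.transpose_mul, Matrix.transpose_transpose,
    Matrix.sub_mul, Matrix.mul_sub, Matrix.mul_assoc, e]
  abel

lemma fs_pyth {m n p : ℕ} (Y : Matrix (Fin m) (Fin n) ℝ) (hY : Yᵀ * Y = 1)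
    (Z : Matrix (Fin m) (Fin p) ℝ) :
    fs (Z - Y * (Yᵀ * Z)) = fs Z - fs (Yᵀ * Z) := by
  rw [fs, pyth Y hY, Matrix.trace_sub]; rfl

lemma fs_contr {m n p : ℕ} (Y : Matrix (Fin m) (Fin n) ℝ) (hY : Yᵀ * Y = 1)
    (Z : Matrix (Fin m) (Fin p) ℝ) : fs (Yᵀ * Z) ≤ fs Z := by
  have := fs_pyth Y hY Z
  have := fs_nonneg (Z - Y * (Yᵀ * Z))
  linarith

lemma contr {m n p : ℕ} (Y : Matrix (Fin m) (Fin n) ℝ) (hY : Yᵀ * Y = 1)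
    (Z : Matrix (Fin m) (Fin p) ℝ) (hZ : Zᵀ * Z = 1) (i : Fin p) :
    ((Yᵀ * Z)ᵀ * (Yᵀ * Z)) i i ≤ 1 := by
  have := gram_diag_nonneg (Z - Y * (Yᵀ * Z)) i
  rw [pyth Y hY, hZ] at this
  simp only [Matrix.sub_apply, Matrix.one_apply_eq] at this
  linarith

lemma fs_orth {m n : ℕ} (Y : Matrix (Fin m) (Fin n) ℝ) (hY : Yᵀ * Y = 1) : fs Y = n := by
  simp [fs, hY]

lemma polar_aux {m : ℕ} (G : Matrix (Fin m) (Fin m) ℝ) (l : Fin m → ℝ)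
    (hG : Gᵀ * G = Matrix.diagonal l) (hl : ∀ i, l i ≤ 1) :
    ∃ T : Matrix (Fin m) (Fin m) ℝ, Tᵀ * T = 1 ∧ fs G ≤ (Tᵀ * G).trace := by
  have hl0 : ∀ i, 0 ≤ l i := fun i => by
    have := gram_diag_nonneg G i
    rwa [hG, Matrix.diagonal_apply_eq] at this
  have hent : ∀ i j, ∑ a, G a i * G a j = if i = j then l i else 0 := fun i j => by
    have := congrFun (congrFun hG i) j
    simpa [Matrix.mul_apply, Matrix.diagonal_apply] using this
  let v : Fin m → EuclideanSpace ℝ (Fin m) := fun i => WithLp.toLp 2 (fun a => (√(l i))⁻¹ * G a i)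
  let S : Set (Fin m) := {i | l i ≠ 0}
  have hv : Orthonormal ℝ (S.domRestrict v) := by
    rw [orthonormal_iff_ite]
    rintro ⟨i, hi⟩ ⟨j, hj⟩
    have hi' : 0 < l i := lt_of_le_of_ne (hl0 i) (Ne.symm hi)
    have e : inner ℝ (v i) (v j) = (√(l i))⁻¹ * (√(l j))⁻¹ * ∑ a, G a i * G a j := by
      simp only [v, PiLp.inner_apply, Finset.mul_sum]
      refine Finset.sum_congr rfl fun a _ => ?_
      simp
      ring
    simp only [Subtype.mk.injEq]
    change inner ℝ (v i) (v j) = _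
    rw [e, hent]
    split_ifs with h
    · subst h
      rw [← mul_inv, Real.mul_self_sqrt hi'.le, inv_mul_cancel₀ hi'.ne']
    · simp
  obtain ⟨b, hb⟩ := hv.exists_orthonormalBasis_extension_of_card_eq (by simp)
  refine ⟨Matrix.of fun a i => b i a, ?_, ?_⟩
  · ext i j
    have := orthonormal_iff_ite.mp b.orthonormal i j
    rw [PiLp.inner_apply] at this
    simp only [Matrix.mul_apply, Matrix.transpose_apply, Matrix.of_apply, Matrix.one_apply]
    rw [← this]
    refine Finset.sum_congr rfl fun a _ => ?_
    simp
    ring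
  · rw [fs, hG, Matrix.trace, Matrix.trace]
    refine Finset.sum_le_sum fun i _ => ?_
    simp only [Matrix.diag_apply, Matrix.diagonal_apply_eq, Matrix.mul_apply,
      Matrix.transpose_apply, Matrix.of_apply]
    by_cases hi : l i = 0
    · have h0 : ∀ a, G a i = 0 := by
        have := hent i i
        rw [if_pos rfl, hi, Finset.sum_eq_zero_iff_of_nonneg (fun a _ => mul_self_nonneg _)] at this
        intro a
        simpa using this a (Finset.mem_univ a)
      simp [h0, hi]
    · rw [hb i hi]
      have hi' : 0 < l i := lt_of_le_of_ne (hl0 i) (Ne.symm hi)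
      have e : ∑ a, (v i) a * G a i = (√(l i))⁻¹ * l i := by
        have := hent i i
        rw [if_pos rfl] at this
        rw [← this, Finset.mul_sum]
        simp only [this, v]
        refine Finset.sum_congr rfl fun a _ => ?_
        ring
      rw [e]
      have h1 : √(l i) ≤ 1 := by simpa using Real.sqrt_le_sqrt (hl i)
      have h2 : 0 < √(l i) := Real.sqrt_pos.mpr hi'
      exact le_mul_of_one_le_left hi'.le ((one_le_inv₀ h2).mpr h1)

lemma polar_s17 {n m : ℕ} (Y Z : Matrix (Fin n) (Fin m) ℝ) (hY : Yᵀ * Y = 1) (hZ : Zᵀ * Z = 1) :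
    ∃ Q : Matrix (Fin m) (Fin m) ℝ, Qᵀ * Q = 1 ∧
      fs (Z - Y * Q) ≤ 2 * (m - fs (Yᵀ * Z)) := by
  obtain ⟨U, l, hU, hUl⟩ : ∃ (U : Matrix (Fin m) (Fin m) ℝ) (l : Fin m → ℝ), Uᵀ * U = 1 ∧
      (Yᵀ * Z * U)ᵀ * (Yᵀ * Z * U) = Matrix.diagonal l := by
    have hH : ((Yᵀ * Z)ᵀ * (Yᵀ * Z)).IsHermitian := by
      simpa using Matrix.isHermitian_conjTranspose_mul_self (Yᵀ * Z)
    have hU : (hH.eigenvectorUnitary : Matrix (Fin m) (Fin m) ℝ)ᵀ * hH.eigenvectorUnitary = 1 := by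
      simpa [Matrix.star_eq_conjTranspose] using
        (Unitary.coe_star_mul_self hH.eigenvectorUnitary)
    refine ⟨hH.eigenvectorUnitary, hH.eigenvalues, hU, ?_⟩
    have h := hH.conjStarAlgAut_star_eigenvectorUnitary
    rw [Unitary.conjStarAlgAut_star_apply] at h
    rw [Matrix.transpose_mul]
    simpa [Matrix.star_eq_conjTranspose, Matrix.mul_assoc] using h
  have hU' : U * Uᵀ = 1 := mul_eq_one_comm.mp hU
  obtain ⟨T, hT, hTG⟩ := polar_aux _ l hUl (fun i => by
    have h := contr Y hY (Z * U) (by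
      rw [Matrix.transpose_mul, Matrix.mul_assoc, ← Matrix.mul_assoc Zᵀ, hZ, Matrix.one_mul, hU]) i
    rwa [← Matrix.mul_assoc Yᵀ, hUl, Matrix.diagonal_apply_eq] at h)
  refine ⟨T * Uᵀ, ?_, ?_⟩
  · rw [Matrix.transpose_mul, Matrix.mul_assoc, ← Matrix.mul_assoc Tᵀ, hT, Matrix.one_mul,
      Matrix.transpose_transpose, hU']
  · have e1 : fs (Y * (T * Uᵀ)) = m := by
      rw [fs_left Y hY, fs_left T hT, fs_transpose, fs_orth U hU]
    have e2 : fs (Yᵀ * Z * U) = fs (Yᵀ * Z) := by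
      have := fs_right Uᵀ (by simpa using hU') (Yᵀ * Z)
      simpa using this
    have e3 : (Zᵀ * (Y * (T * Uᵀ))).trace = (Tᵀ * (Yᵀ * Z * U)).trace := by
      rw [← Matrix.trace_transpose]
      simp only [Matrix.transpose_mul, Matrix.transpose_transpose]
      rw [Matrix.mul_assoc, Matrix.mul_assoc, Matrix.trace_mul_comm]
      simp only [Matrix.mul_assoc]
    rw [fs_sub, e1, fs_orth Z hZ, e3]
    linarith

lemma fs_lowb {k r m : ℕ} (V1 : Matrix (Fin k) (Fin r) ℝ) (h1 : V1ᵀ * V1 = 1)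
    (a : Fin r → ℝ) (σ : ℝ) (hσ : 0 < σ) (ha : ∀ i, σ ≤ a i) (B : Matrix (Fin r) (Fin m) ℝ) :
    σ ^ 2 * fs B ≤ fs (V1 * (Matrix.diagonal a * B)) := by
  rw [fs_left V1 h1, fs_eq, fs_eq, Finset.mul_sum]
  refine Finset.sum_le_sum fun j _ => ?_
  rw [Finset.mul_sum]
  refine Finset.sum_le_sum fun i _ => ?_
  rw [Matrix.diagonal_mul, mul_pow]
  have := pow_le_pow_left₀ hσ.le (ha i) 2
  gcongr

lemma fs_mul_orth_le {p k m : ℕ} (B : Matrix (Fin p) (Fin k) ℝ) (Y : Matrix (Fin k) (Fin m) ℝ)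
    (hY : Yᵀ * Y = 1) : fs (B * Y) ≤ fs B := by
  rw [← fs_transpose, Matrix.transpose_mul, ← fs_transpose B]
  exact fs_contr Y hY _

lemma sinV {n k r m : ℕ} (D X Xt : Matrix (Fin n) (Fin k) ℝ)
    (hX : Xᵀ * X = 1) (hXt : Xtᵀ * Xt = 1)
    (V1 : Matrix (Fin k) (Fin r) ℝ) (h1 : V1ᵀ * V1 = 1)
    (Vt2 : Matrix (Fin k) (Fin m) ℝ) (ht2 : Vt2ᵀ * Vt2 = 1)
    (a : Fin r → ℝ) (σ : ℝ) (hσ : 0 < σ) (ha : ∀ i, σ ≤ a i)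
    (hdec : Xᵀ * D = V1 * Matrix.diagonal a * V1ᵀ)
    (hz : Xtᵀ * D * Vt2 = 0) :
    σ ^ 2 * fs (V1ᵀ * Vt2) ≤ specNorm D ^ 2 * (k - fs (Xᵀ * Xt)) := by
  have e : V1 * (Matrix.diagonal a * (V1ᵀ * Vt2)) = (X - Xt * (Xtᵀ * X))ᵀ * D * Vt2 := by
    have : (X - Xt * (Xtᵀ * X))ᵀ * D * Vt2 = Xᵀ * D * Vt2 - Xᵀ * Xt * (Xtᵀ * D * Vt2) := by
      simp only [Matrix.transpose_sub, Matrix.transpose_mul, Matrix.transpose_transpose,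
        Matrix.sub_mul, Matrix.mul_assoc]
    rw [this, hz, hdec]
    simp only [Matrix.mul_assoc, Matrix.mul_zero, sub_zero]
  have h := fs_lowb V1 h1 a σ hσ ha (V1ᵀ * Vt2)
  rw [e] at h
  refine h.trans ((fs_mul_orth_le _ _ ht2).trans ((fs_spec_right _ _).trans ?_))
  rw [fs_transpose, fs_pyth Xt hXt, fs_orth X hX, ← fs_transpose (Xtᵀ * X), Matrix.transpose_mul,
    Matrix.transpose_transpose]

lemma sinU {n k r m : ℕ} (D X Xt : Matrix (Fin n) (Fin k) ℝ)
    (hX : Xᵀ * X = 1) (hXt : Xtᵀ * Xt = 1)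
    (V1 : Matrix (Fin k) (Fin r) ℝ) (h1 : V1ᵀ * V1 = 1)
    (Vt2 : Matrix (Fin k) (Fin m) ℝ) (ht2 : Vt2ᵀ * Vt2 = 1)
    (a : Fin r → ℝ) (σ : ℝ) (hσ : 0 < σ) (ha : ∀ i, σ ≤ a i)
    (hdec : Xᵀ * D = V1 * Matrix.diagonal a * V1ᵀ)
    (hz : (Xtᵀ * D)ᵀ * Vt2 = 0) :
    σ ^ 2 * fs (V1ᵀ * (Xᵀ * (Xt * Vt2))) ≤ specNorm D ^ 2 * (k - fs (Xᵀ * Xt)) := by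
  have hdec' : Dᵀ * X = V1 * Matrix.diagonal a * V1ᵀ := by
    have := congrArg Matrix.transpose hdec
    simpa [Matrix.transpose_mul, Matrix.mul_assoc] using this
  have hz' : Dᵀ * (Xt * Vt2) = 0 := by
    simpa [Matrix.transpose_mul, Matrix.mul_assoc] using hz
  have e : V1 * (Matrix.diagonal a * (V1ᵀ * (Xᵀ * (Xt * Vt2)))) =
      - (Dᵀ * (Xt - X * (Xᵀ * Xt)) * Vt2) := by
    have : Dᵀ * (Xt - X * (Xᵀ * Xt)) * Vt2 = Dᵀ * (Xt * Vt2) - Dᵀ * X * (Xᵀ * (Xt * Vt2)) := by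
      simp only [Matrix.mul_sub, Matrix.sub_mul, Matrix.mul_assoc]
    rw [this, hz', hdec']
    simp only [Matrix.mul_assoc, zero_sub, neg_neg]
  have h := fs_lowb V1 h1 a σ hσ ha (V1ᵀ * (Xᵀ * (Xt * Vt2)))
  have en : ∀ B : Matrix (Fin k) (Fin m) ℝ, fs (-B) = fs B := fun B => by simp [fs]
  rw [e, en] at h
  refine h.trans ((fs_mul_orth_le _ _ ht2).trans ((fs_spec_left _ _).trans ?_))
  rw [fs_pyth X hX, fs_orth Xt hXt, specNorm_transpose]

lemma fs_split {k r m p : ℕ} (V1 : Matrix (Fin k) (Fin r) ℝ) (V2 : Matrix (Fin k) (Fin m) ℝ)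
    (h12 : V1 * V1ᵀ + V2 * V2ᵀ = 1) (B : Matrix (Fin k) (Fin p) ℝ) :
    fs B = fs (V1ᵀ * B) + fs (V2ᵀ * B) := by
  have : Bᵀ * B = Bᵀ * (V1 * V1ᵀ + V2 * V2ᵀ) * B := by rw [h12, Matrix.mul_one]
  rw [fs, this, fs, fs, ← Matrix.trace_add]
  simp only [Matrix.mul_add, Matrix.add_mul, Matrix.transpose_mul, Matrix.transpose_transpose,
    Matrix.mul_assoc]

lemma sinU2 {n k r m : ℕ} (X Xt : Matrix (Fin n) (Fin k) ℝ)
    (hX : Xᵀ * X = 1) (hXt : Xtᵀ * Xt = 1)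
    (V1 : Matrix (Fin k) (Fin r) ℝ) (V2 : Matrix (Fin k) (Fin m) ℝ)
    (h12 : V1 * V1ᵀ + V2 * V2ᵀ = 1)
    (Vt2 : Matrix (Fin k) (Fin m) ℝ) (ht2 : Vt2ᵀ * Vt2 = 1) :
    m - fs ((X * V2)ᵀ * (Xt * Vt2)) ≤
      (k - fs (Xᵀ * Xt)) + fs (V1ᵀ * (Xᵀ * (Xt * Vt2))) := by
  have a1 := fs_pyth X hX (Xt * Vt2)
  rw [fs_left Xt hXt, fs_orth Vt2 ht2, fs_split V1 V2 h12] at a1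
  have a2 : fs (Xt * Vt2 - X * (Xᵀ * (Xt * Vt2))) ≤ k - fs (Xᵀ * Xt) := by
    rw [← fs_orth Xt hXt, ← fs_pyth X hX]
    have := fs_mul_orth_le (Xt - X * (Xᵀ * Xt)) Vt2 ht2
    simpa only [Matrix.sub_mul, Matrix.mul_assoc] using this
  have : (X * V2)ᵀ * (Xt * Vt2) = V2ᵀ * (Xᵀ * (Xt * Vt2)) := by
    rw [Matrix.transpose_mul, Matrix.mul_assoc]
  rw [this]
  linarith

lemma polar_half {n k r : ℕ} (X Xt : Matrix (Fin n) (Fin k) ℝ)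
    (hX : Xᵀ * X = 1) (hXt : Xtᵀ * Xt = 1)
    (V1 Vt1 : Matrix (Fin k) (Fin r) ℝ) (h1 : V1ᵀ * V1 = 1) (ht1 : Vt1ᵀ * Vt1 = 1)
    (a : Fin r → ℝ) (σ : ℝ) (ha : ∀ i, σ ≤ a i) :
    σ * (r - ((X * V1 * V1ᵀ)ᵀ * (Xt * Vt1 * Vt1ᵀ)).trace) ≤
      ((X * (V1 * Matrix.diagonal a * V1ᵀ))ᵀ * (X * V1 * V1ᵀ - Xt * Vt1 * Vt1ᵀ)).trace := by
  have orth : ∀ (X : Matrix (Fin n) (Fin k) ℝ) (V1 : Matrix (Fin k) (Fin r) ℝ), Xᵀ * X = 1 →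
      V1ᵀ * V1 = 1 → (X * V1)ᵀ * (X * V1) = 1 := fun X V1 hX h1 => by
    rw [Matrix.transpose_mul, Matrix.mul_assoc, ← Matrix.mul_assoc Xᵀ, hX, Matrix.one_mul, h1]
  have hU := orth X V1 hX h1
  have hUt := orth Xt Vt1 hXt ht1
  set U := X * V1 with hUdef
  set Ut := Xt * Vt1 with hUtdef
  set C := (Utᵀ * U)ᵀ * (Vt1ᵀ * V1) with hC
  have hCi : ∀ i, C i i ≤ 1 := fun i => by
    have b1 := contr Ut hUt U hU i
    have b2 := contr Vt1 ht1 V1 h1 i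
    rw [hC]
    rw [Matrix.mul_apply] at b1 b2 ⊢
    have : 2 * ∑ j, (Utᵀ * U)ᵀ i j * (Vt1ᵀ * V1) j i ≤
        ∑ j, (Utᵀ * U)ᵀ i j * (Utᵀ * U) j i + ∑ j, (Vt1ᵀ * V1)ᵀ i j * (Vt1ᵀ * V1) j i := by
      rw [Finset.mul_sum, ← Finset.sum_add_distrib]
      refine Finset.sum_le_sum fun j _ => ?_
      rw [Matrix.transpose_apply, Matrix.transpose_apply]
      nlinarith [sq_nonneg ((Utᵀ * U) j i - (Vt1ᵀ * V1) j i)]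
    linarith
  have e1 : ((U * V1ᵀ)ᵀ * (Ut * Vt1ᵀ)).trace = C.trace := by
    rw [Matrix.transpose_mul, Matrix.transpose_transpose, Matrix.mul_assoc, Matrix.trace_mul_comm]
    simp only [hC, Matrix.transpose_mul, Matrix.transpose_transpose, Matrix.mul_assoc]
  have e2 : ((X * (V1 * Matrix.diagonal a * V1ᵀ))ᵀ * (U * V1ᵀ - Ut * Vt1ᵀ)).trace
      = (Matrix.diagonal a * (1 - C)).trace := by
    have : X * (V1 * Matrix.diagonal a * V1ᵀ) = U * Matrix.diagonal a * V1ᵀ := by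
      simp only [hUdef, Matrix.mul_assoc]
    rw [this, Matrix.transpose_mul, Matrix.transpose_transpose, Matrix.mul_assoc,
      Matrix.trace_mul_comm, Matrix.transpose_mul, Matrix.diagonal_transpose]
    congr 1
    rw [Matrix.mul_assoc, Matrix.mul_assoc]
    congr 1
    rw [Matrix.sub_mul, Matrix.mul_sub, Matrix.mul_assoc, h1, Matrix.mul_one, hU]
    simp only [hC, Matrix.transpose_mul, Matrix.transpose_transpose, Matrix.mul_assoc]
  rw [e1, e2]
  have : (r : ℝ) - C.trace = ∑ i, (1 - C i i) := by
    simp [Matrix.trace]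
  rw [this, Finset.mul_sum, Matrix.trace]
  refine Finset.sum_le_sum fun i _ => ?_
  rw [Matrix.diag_apply, Matrix.diagonal_mul, Matrix.sub_apply, Matrix.one_apply_eq]
  exact mul_le_mul_of_nonneg_right (ha i) (by linarith [hCi i])

lemma fs_proj {n k : ℕ} (X Xt : Matrix (Fin n) (Fin k) ℝ)
    (hX : Xᵀ * X = 1) (hXt : Xtᵀ * Xt = 1) :
    fs (X * Xᵀ - Xt * Xtᵀ) = 2 * (k - fs (Xᵀ * Xt)) := by
  rw [fs_sub, fs_left X hX, fs_left Xt hXt, fs_transpose, fs_transpose, fs_orth X hX,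
    fs_orth Xt hXt]
  have : ((X * Xᵀ)ᵀ * (Xt * Xtᵀ)).trace = fs (Xᵀ * Xt) := by
    rw [← fs_transpose, fs]
    simp only [Matrix.transpose_mul, Matrix.transpose_transpose]
    rw [Matrix.mul_assoc, Matrix.trace_mul_comm]
    simp only [Matrix.mul_assoc]
  rw [this]; ring

lemma polar_pert {n k r : ℕ} (D X Xt : Matrix (Fin n) (Fin k) ℝ)
    (hX : Xᵀ * X = 1) (hXt : Xtᵀ * Xt = 1)
    (V1 Vt1 : Matrix (Fin k) (Fin r) ℝ) (h1 : V1ᵀ * V1 = 1) (ht1 : Vt1ᵀ * Vt1 = 1)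
    (a at' : Fin r → ℝ) (σ σt : ℝ) (hσ : 0 < σ) (hσt : 0 < σt)
    (ha : ∀ i, σ ≤ a i) (hat : ∀ i, σt ≤ at' i)
    (hdec : Xᵀ * D = V1 * Matrix.diagonal a * V1ᵀ)
    (hdect : Xtᵀ * D = Vt1 * Matrix.diagonal at' * Vt1ᵀ) :
    frobNorm (Xt * Vt1 * Vt1ᵀ - X * V1 * V1ᵀ) ≤
      2 * √2 * specNorm D / (σ + σt) * √(k - fs (Xᵀ * Xt)) := by
  have p1 := polar_half X Xt hX hXt V1 Vt1 h1 ht1 a σ ha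
  have p2 := polar_half Xt X hXt hX Vt1 V1 ht1 h1 at' σt hat
  rw [← hdec] at p1
  rw [← hdect] at p2
  have f1 : ∀ (X : Matrix (Fin n) (Fin k) ℝ) (V1 : Matrix (Fin k) (Fin r) ℝ), Xᵀ * X = 1 →
      V1ᵀ * V1 = 1 → fs (X * V1 * V1ᵀ) = r := fun X V1 hX h1 => by
    rw [fs_right V1 h1, fs_left X hX, fs_orth V1 h1]
  have g1 := f1 X V1 hX h1
  have g2 := f1 Xt Vt1 hXt ht1
  set Q := X * V1 * V1ᵀ
  set Qt := Xt * Vt1 * Vt1ᵀ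
  have hsym : (Qᵀ * Qt).trace = (Qtᵀ * Q).trace := by
    rw [← Matrix.trace_transpose, Matrix.transpose_mul, Matrix.transpose_transpose]
  have hfs := fs_sub Qt Q
  rw [g1, g2] at hfs
  have hsum : ((X * (Xᵀ * D))ᵀ * (Q - Qt)).trace + ((Xt * (Xtᵀ * D))ᵀ * (Qt - Q)).trace
      = (((Xt * Xtᵀ - X * Xᵀ) * D)ᵀ * (Qt - Q)).trace := by
    rw [← Matrix.trace_add]
    congr 1
    rw [← neg_sub Qt Q, Matrix.mul_neg, Matrix.sub_mul, Matrix.transpose_sub, Matrix.sub_mul]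
    simp only [Matrix.mul_assoc]
    abel
  have hcs := trace_le ((Xt * Xtᵀ - X * Xᵀ) * D) (Qt - Q)
  have hE : frobNorm ((Xt * Xtᵀ - X * Xᵀ) * D) ≤ √2 * specNorm D * √(k - fs (Xᵀ * Xt)) := by
    have h := fs_spec_right D (Xt * Xtᵀ - X * Xᵀ)
    rw [fs_proj Xt X hXt hX, ← fs_transpose (Xtᵀ * X), Matrix.transpose_mul,
      Matrix.transpose_transpose] at h
    rw [frobNorm_def2]
    refine (Real.sqrt_le_sqrt h).trans (le_of_eq ?_)
    rw [Real.sqrt_mul (sq_nonneg _), Real.sqrt_sq (specNorm_nonneg D),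
      Real.sqrt_mul (by norm_num)]
    ring
  rw [← frobNorm_sq] at hfs
  have hf := frobNorm_nonneg (Qt - Q)
  set f := frobNorm (Qt - Q)
  have key : (σ + σt) / 2 * f ^ 2 ≤ √2 * specNorm D * √(k - fs (Xᵀ * Xt)) * f := by
    have := mul_le_mul_of_nonneg_right hE hf
    have e : (σ + σt) / 2 * f ^ 2 = σ * (r - (Qᵀ * Qt).trace) + σt * (r - (Qtᵀ * Q).trace) := by
      rw [hfs, hsym]; ring
    linarith
  have hp : 0 < σ + σt := by positivity
  rw [div_mul_eq_mul_div, le_div_iff₀ hp]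
  rcases hf.eq_or_lt with h0 | h0
  · rw [← h0, zero_mul]
    have := specNorm_nonneg D
    positivity
  · have : (σ + σt) / 2 * f ≤ √2 * specNorm D * √(k - fs (Xᵀ * Xt)) := by
      apply le_of_mul_le_mul_right _ h0
      linarith
    linarith

set_option maxHeartbeats 2000000 in
lemma abstract_bound {n k r m : ℕ} (D X Xt : Matrix (Fin n) (Fin k) ℝ)
    (hX : Xᵀ * X = 1) (hXt : Xtᵀ * Xt = 1)
    (V1 Vt1 : Matrix (Fin k) (Fin r) ℝ) (h1 : V1ᵀ * V1 = 1) (ht1 : Vt1ᵀ * Vt1 = 1)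
    (V2 Vt2 : Matrix (Fin k) (Fin m) ℝ) (h2 : V2ᵀ * V2 = 1) (ht2 : Vt2ᵀ * Vt2 = 1)
    (h12 : V1 * V1ᵀ + V2 * V2ᵀ = 1) (ht12 : Vt1 * Vt1ᵀ + Vt2 * Vt2ᵀ = 1)
    (ho : V1ᵀ * V2 = 0) (hot : Vt1ᵀ * Vt2 = 0)
    (a at' : Fin r → ℝ) (σ σt : ℝ) (hσ : 0 < σ) (hσt : 0 < σt)
    (ha : ∀ i, σ ≤ a i) (hat : ∀ i, σt ≤ at' i)
    (hdec : Xᵀ * D = V1 * Matrix.diagonal a * V1ᵀ)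
    (hdect : Xtᵀ * D = Vt1 * Matrix.diagonal at' * Vt1ᵀ)
    (Wt : Matrix (Fin m) (Fin m) ℝ) (hWt : Wtᵀ * Wt = 1) :
    ∃ W : Matrix (Fin m) (Fin m) ℝ, Wᵀ * W = 1 ∧
      frobNorm ((Xt * Vt1 * Vt1ᵀ + Xt * Vt2 * Wt * Vt2ᵀ) -
        (X * V1 * V1ᵀ + X * V2 * W * V2ᵀ)) ≤
      (√2 + 2 * √2 * specNorm D / (σ + σt) + 4 * specNorm D / max σ σt) *
        √(k - frobNorm (Xᵀ * Xt) ^ 2) := by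
  have orth : ∀ {p q l : ℕ} (X : Matrix (Fin p) (Fin q) ℝ) (V1 : Matrix (Fin q) (Fin l) ℝ),
      Xᵀ * X = 1 → V1ᵀ * V1 = 1 → (X * V1)ᵀ * (X * V1) = 1 := fun X V1 hX h1 => by
    rw [Matrix.transpose_mul, Matrix.mul_assoc, ← Matrix.mul_assoc Xᵀ, hX, Matrix.one_mul, h1]
  have hz : Xᵀ * D * V2 = 0 := by rw [hdec, Matrix.mul_assoc, ho, Matrix.mul_zero]
  have hzt : Xtᵀ * D * Vt2 = 0 := by rw [hdect, Matrix.mul_assoc, hot, Matrix.mul_zero]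
  have hz' : (Xᵀ * D)ᵀ * V2 = 0 := by
    rw [hdec]; simp [Matrix.transpose_mul, Matrix.mul_assoc, ho]
  have hzt' : (Xtᵀ * D)ᵀ * Vt2 = 0 := by
    rw [hdect]; simp [Matrix.transpose_mul, Matrix.mul_assoc, hot]
  have pp := polar_pert D X Xt hX hXt V1 Vt1 h1 ht1 a at' σ σt hσ hσt ha hat hdec hdect
  have swap : ∀ {p q l : ℕ} (A : Matrix (Fin p) (Fin q) ℝ) (B : Matrix (Fin p) (Fin l) ℝ),
      fs (Aᵀ * B) = fs (Bᵀ * A) := fun A B => by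
    rw [← fs_transpose, Matrix.transpose_mul, Matrix.transpose_transpose]
  have v1 := sinV D X Xt hX hXt V1 h1 Vt2 ht2 a σ hσ ha hdec hzt
  have v2 := sinV D Xt X hXt hX Vt1 ht1 V2 h2 at' σt hσt hat hdect hz
  have u1 := sinU D X Xt hX hXt V1 h1 Vt2 ht2 a σ hσ ha hdec hzt'
  have u2 := sinU D Xt X hXt hX Vt1 ht1 V2 h2 at' σt hσt hat hdect hz'
  have w1 := sinU2 X Xt hX hXt V1 V2 h12 Vt2 ht2
  have w2 := sinU2 Xt X hXt hX Vt1 Vt2 ht12 V2 h2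
  have c1 := fs_split V1 V2 h12 Vt2
  have c2 := fs_split Vt1 Vt2 ht12 V2
  rw [fs_orth Vt2 ht2] at c1
  rw [fs_orth V2 h2, swap Vt2 V2] at c2
  rw [swap Xt X] at v2 u2 w2
  rw [swap (Xt * Vt2) (X * V2)] at w2
  rw [frobNorm_sq]
  have hθ : 0 ≤ (k : ℝ) - fs (Xᵀ * Xt) := by
    rw [← fs_orth Xt hXt, ← fs_pyth X hX]; exact fs_nonneg _
  have hd := specNorm_nonneg D
  set d := specNorm D
  set t := (k : ℝ) - fs (Xᵀ * Xt)
  have hmax : 0 < max σ σt := lt_max_of_lt_left hσ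
  have bv : m - fs (V2ᵀ * Vt2) ≤ (d / max σ σt) ^ 2 * t := by
    rw [div_pow, div_mul_eq_mul_div, le_div_iff₀ (by positivity)]
    rcases max_choice σ σt with h | h <;> rw [h]
    · nlinarith
    · nlinarith
  have bu : m - fs ((X * V2)ᵀ * (Xt * Vt2)) ≤ (1 + (d / max σ σt) ^ 2) * t := by
    have : ∀ x y : ℝ, 0 < y → y ^ 2 * x ≤ d ^ 2 * t → x ≤ (d / y) ^ 2 * t := fun x y hy h => by
      rw [div_pow, div_mul_eq_mul_div, le_div_iff₀ (by positivity)]; linarith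
    rcases max_choice σ σt with h | h <;> rw [h]
    · have := this _ _ hσ u1; linarith
    · have := this _ _ hσt u2; linarith
  obtain ⟨Q, hQ, hQb⟩ := polar_s17 V2 Vt2 h2 ht2
  obtain ⟨P, hP, hPb⟩ := polar_s17 (X * V2) (Xt * Vt2) (orth _ _ hX h2) (orth _ _ hXt ht2)
  have hQ' : Q * Qᵀ = 1 := mul_eq_one_comm.mp hQ
  have hQT : Qᵀᵀ * Qᵀ = 1 := by simpa using hQ'
  refine ⟨P * Wt * Qᵀ, orth _ _ (orth _ _ hP hWt) hQT, ?_⟩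
  have hdiff : (Xt * Vt1 * Vt1ᵀ + Xt * Vt2 * Wt * Vt2ᵀ) -
        (X * V1 * V1ᵀ + X * V2 * (P * Wt * Qᵀ) * V2ᵀ) =
      (Xt * Vt1 * Vt1ᵀ - X * V1 * V1ᵀ) + ((Xt * Vt2 - X * V2 * P) * Wt * Vt2ᵀ +
        X * V2 * P * Wt * (Vt2 - V2 * Q)ᵀ) := by
    simp only [Matrix.transpose_sub, Matrix.transpose_mul, Matrix.mul_sub, Matrix.sub_mul,
      Matrix.mul_assoc]
    abel
  rw [hdiff]
  have n1 : frobNorm ((Xt * Vt2 - X * V2 * P) * Wt * Vt2ᵀ) ≤ (√2 + √2 * (d / max σ σt)) * √t := by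
    have hWtT : Wtᵀᵀ * Wtᵀ = 1 := by simpa using mul_eq_one_comm.mp hWt
    have e : fs ((Xt * Vt2 - X * V2 * P) * Wt * Vt2ᵀ) = fs (Xt * Vt2 - X * V2 * P) := by
      rw [fs_right Vt2 ht2]
      simpa using fs_right Wtᵀ hWtT (Xt * Vt2 - X * V2 * P)
    rw [frobNorm_def2, e]
    apply Real.sqrt_le_iff.mpr
    refine ⟨by positivity, hPb.trans ?_⟩
    have e2 : ((√2 + √2 * (d / max σ σt)) * √t) ^ 2 = 2 * ((1 + d / max σ σt) ^ 2 * t) := by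
      have : (√2 + √2 * (d / max σ σt)) * √t = √2 * ((1 + d / max σ σt) * √t) := by ring
      rw [this, mul_pow, mul_pow, Real.sq_sqrt (by norm_num), Real.sq_sqrt hθ]
    rw [e2]
    have h0 : 0 ≤ d / max σ σt * t := by positivity
    nlinarith
  have n2 : frobNorm (X * V2 * P * Wt * (Vt2 - V2 * Q)ᵀ) ≤ √2 * (d / max σ σt) * √t := by
    have e : fs (X * V2 * P * Wt * (Vt2 - V2 * Q)ᵀ) = fs (Vt2 - V2 * Q) := by
      rw [fs_left _ (orth _ _ (orth _ _ (orth _ _ hX h2) hP) hWt), fs_transpose]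
    rw [frobNorm_def2, e]
    apply Real.sqrt_le_iff.mpr
    refine ⟨by positivity, hQb.trans ?_⟩
    rw [mul_pow, mul_pow, Real.sq_sqrt (by norm_num), Real.sq_sqrt hθ]
    linarith
  have n3 := frobNorm_add_le (Xt * Vt1 * Vt1ᵀ - X * V1 * V1ᵀ)
    ((Xt * Vt2 - X * V2 * P) * Wt * Vt2ᵀ + X * V2 * P * Wt * (Vt2 - V2 * Q)ᵀ)
  have n4 := frobNorm_add_le ((Xt * Vt2 - X * V2 * P) * Wt * Vt2ᵀ)
    (X * V2 * P * Wt * (Vt2 - V2 * Q)ᵀ)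
  have h2' : √2 ≤ 2 := by
    rw [Real.sqrt_le_iff]; norm_num
  have h0 : 0 ≤ d / max σ σt * √t := by positivity
  have : 4 * d / max σ σt = 4 * (d / max σ σt) := by ring
  rw [this]
  nlinarith

lemma sum_cols {k r : ℕ} (h : r ≤ k) (f : Fin k → ℝ) :
    ∑ i, f i = ∑ i : Fin r, f (Fin.castLE h i) +
      ∑ j : Fin (k - r), f (Fin.cast (Nat.add_sub_cancel' h) (Fin.natAdd r j)) := by
  rw [← (finCongr (Nat.add_sub_cancel' h)).sum_comp, Fin.sum_univ_add]
  rfl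

lemma cols_split {k r : ℕ} (h : r ≤ k) (V : Matrix (Fin k) (Fin k) ℝ) (hV : Vᵀ * V = 1) :
    headCols r h V * (headCols r h V)ᵀ + tailCols r h V * (tailCols r h V)ᵀ = 1 := by
  rw [← mul_eq_one_comm.mp hV]
  ext i j
  simp only [Matrix.add_apply, Matrix.mul_apply, Matrix.transpose_apply]
  rw [sum_cols h]
  rfl

lemma cols_dec {k r : ℕ} (h : r ≤ k) (V : Matrix (Fin k) (Fin k) ℝ) (s : Fin k → ℝ)
    (hs : ∀ i : Fin k, r ≤ (i : ℕ) → s i = 0) :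
    V * Matrix.diagonal s * Vᵀ =
      headCols r h V * Matrix.diagonal (fun i => s (Fin.castLE h i)) * (headCols r h V)ᵀ := by
  ext i j
  rw [Matrix.mul_apply, Matrix.mul_apply, sum_cols h]
  simp only [Matrix.mul_diagonal, Matrix.transpose_apply]
  rw [add_eq_left.mpr]
  · rfl
  · refine Finset.sum_eq_zero fun x _ => ?_
    rw [hs _ (by simp)]; simp

lemma head_orth {k r : ℕ} (h : r ≤ k) (V : Matrix (Fin k) (Fin k) ℝ) (hV : Vᵀ * V = 1) :
    (headCols r h V)ᵀ * headCols r h V = 1 := by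
  ext i j
  have := congrFun (congrFun hV (Fin.castLE h i)) (Fin.castLE h j)
  simpa [Matrix.mul_apply, headCols, Matrix.one_apply, Fin.ext_iff] using this

lemma tail_orth {k r : ℕ} (h : r ≤ k) (V : Matrix (Fin k) (Fin k) ℝ) (hV : Vᵀ * V = 1) :
    (tailCols r h V)ᵀ * tailCols r h V = 1 := by
  ext i j
  have := congrFun (congrFun hV (Fin.cast (Nat.add_sub_cancel' h) (Fin.natAdd r i)))
    (Fin.cast (Nat.add_sub_cancel' h) (Fin.natAdd r j))
  simpa [Matrix.mul_apply, tailCols, Matrix.one_apply, Fin.ext_iff] using this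

lemma head_tail {k r : ℕ} (h : r ≤ k) (V : Matrix (Fin k) (Fin k) ℝ) (hV : Vᵀ * V = 1) :
    (headCols r h V)ᵀ * tailCols r h V = 0 := by
  ext i j
  have := congrFun (congrFun hV (Fin.castLE h i))
    (Fin.cast (Nat.add_sub_cancel' h) (Fin.natAdd r j))
  rw [Matrix.one_apply_ne (by
    intro e
    have := congrArg Fin.val e
    simp at this
    omega)] at this
  simpa [Matrix.mul_apply, headCols, tailCols] using this

end helpers

/-- Hausdorff-distance bound (Frobenius norm): for every orthogonal W̃
there is an orthogonal W such that
‖(X̃Ṽ₁Ṽ₁ᵀ + X̃Ṽ₂W̃Ṽ₂ᵀ) − (XV₁V₁ᵀ + XV₂WV₂ᵀ)‖_F ≤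
(√2 + 2√2‖D‖₂/(σ_r + σ̃_r) + 4‖D‖₂/max{σ_r, σ̃_r})·√(k − ‖XᵀX̃‖_F²). -/
theorem hausdorff_bound {n k r : ℕ} (hr : 1 ≤ r) (hrk : r < k) (hkn : k ≤ n)
    (D X Xt : Matrix (Fin n) (Fin k) ℝ)
    (hX : Xᵀ * X = 1) (hXt : Xtᵀ * Xt = 1)
    (hpsd : (Xᵀ * D).PosSemidef) (hpsdt : (Xtᵀ * D).PosSemidef)
    (hrank : (Xᵀ * D).rank = r) (hrankt : (Xtᵀ * D).rank = r)
    (V Vt : Matrix (Fin k) (Fin k) ℝ) (hV : Vᵀ * V = 1) (hVt : Vtᵀ * Vt = 1)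
    (s st : Fin k → ℝ)
    (hord : ∀ i j : Fin k, i ≤ j → s j ≤ s i)
    (hordt : ∀ i j : Fin k, i ≤ j → st j ≤ st i)
    (hpos : ∀ i : Fin k, (i : ℕ) < r → 0 < s i)
    (hpost : ∀ i : Fin k, (i : ℕ) < r → 0 < st i)
    (hzero : ∀ i : Fin k, r ≤ (i : ℕ) → s i = 0)
    (hzerot : ∀ i : Fin k, r ≤ (i : ℕ) → st i = 0)
    (hdec : Xᵀ * D = V * Matrix.diagonal s * Vᵀ)
    (hdect : Xtᵀ * D = Vt * Matrix.diagonal st * Vtᵀ) :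
    ∀ Wt : Matrix (Fin (k - r)) (Fin (k - r)) ℝ, Wtᵀ * Wt = 1 →
      ∃ W : Matrix (Fin (k - r)) (Fin (k - r)) ℝ, Wᵀ * W = 1 ∧
        frobNorm ((Xt * headCols r hrk.le Vt * (headCols r hrk.le Vt)ᵀ +
              Xt * tailCols r hrk.le Vt * Wt * (tailCols r hrk.le Vt)ᵀ) -
            (X * headCols r hrk.le V * (headCols r hrk.le V)ᵀ +
              X * tailCols r hrk.le V * W * (tailCols r hrk.le V)ᵀ))
          ≤ (Real.sqrt 2 +
              2 * Real.sqrt 2 * specNorm D /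
                (s ⟨r - 1, by omega⟩ + st ⟨r - 1, by omega⟩) +
              4 * specNorm D / max (s ⟨r - 1, by omega⟩) (st ⟨r - 1, by omega⟩)) *
            Real.sqrt ((k : ℝ) - frobNorm (Xᵀ * Xt) ^ 2) := by
  intro Wt hWt
  have hle : ∀ i : Fin r, Fin.castLE hrk.le i ≤ (⟨r - 1, by omega⟩ : Fin k) := fun i => by
    rw [Fin.le_def]; simp; omega
  exact abstract_bound D X Xt hX hXt _ _ (head_orth hrk.le V hV) (head_orth hrk.le Vt hVt)
    _ _ (tail_orth hrk.le V hV) (tail_orth hrk.le Vt hVt)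
    (cols_split hrk.le V hV) (cols_split hrk.le Vt hVt)
    (head_tail hrk.le V hV) (head_tail hrk.le Vt hVt) _ _ _ _
    (hpos _ (by simp; omega)) (hpost _ (by simp; omega))
    (fun i => hord _ _ (hle i)) (fun i => hordt _ _ (hle i))
    (hdec.trans (cols_dec hrk.le V s hzero)) (hdect.trans (cols_dec hrk.le Vt st hzerot)) Wt hWt
end
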